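/- arXiv:2110.06320 — 3 statements merged into one kernel-verified Lean document; each statement's English description precedes it below -/
import Mathlib

section
/- Let (X,d) be a σ-compact metric space, α > 0, Φ = {φ_t}_{t∈ℝ} a Borel measurable, (d,α)-polynomially-sub-divergent flow on X, β > 0, and μ a Φ-invariant, (d,β)-sub-uniform Borel probability measure on X. Suppose there exist γ > 0 and a countable dense subset S of the space C₀(X) of continuous compactly supported functions (with the sup-norm topology) consisting of compactly supported Lipschitz functions such that Φ is (f,μ,γ)-polynomially-mixing for every f ∈ S. Then the Hausdorff dimension of E(Φ,μ) is at most β − α⁻¹·min{1,γ}. -/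
/-!
Density of `S` reduces the claim to a single Lipschitz, compactly supported `f`, and σ-compactness
to points of a compact set `K` whose centred orbit averages exceed a fixed `ε` at arbitrarily large
times; along a geometric sequence of times they still exceed `ε / 2`
(`frequently_pow_of_frequently`).

Fix such a time `T`. Polynomial mixing gives a mean-square bound `O(T ^ (-γ'))` for the centred
averages, for any `γ' < min 1 γ` (`exists_integral_sq_le`), so by Chebyshev the set of deviation at
least `ε / 4` has measure `O(T ^ (-γ'))`. Sub-divergence makes orbit averages almost constant on
balls of radius `r = κ * T ^ (-α)` (`exists_orbit_integral_close`), so this set contains all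
`r`-balls around points of `K` with deviation above `ε / 2`. Each such ball has measure at least
`c * r ^ β`, so `O(T ^ (α * β - γ'))` balls of radius `2 * r` cover those points
(`exists_finset_cover`). The sum of the `s`-th powers of the radii over the geometric sequence of
times converges as soon as `s > β - γ' / α`, and a Borel–Cantelli argument
(`hausdorffMeasure_frequently_eq_zero`) shows that the upper limit set is `μH[s]`-null. Letting `γ'`
tend to `min 1 γ` gives the bound.

The space need not be locally compact, so balls around points of `K` need not lie in a compact set;
`exists_uniform_div` shows that the sub-divergence estimate nevertheless holds near `K`.
-/

open MeasureTheory Filter Metric Set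

/-- Orbit average `(A_T f)(x) = (1/T) ∫₀^T f(φ_t x) dt`. -/
noncomputable def flowAvg {X : Type*} (φ : ℝ → X → X) (f : X → ℝ) (T : ℝ) (x : X) : ℝ :=
  (1 / T) * ∫ t in (0:ℝ)..T, f (φ t x)


/-! ### Sub-divergence near a compact set -/

/-- Sub-divergence extends from a compact set `K` to a metric neighbourhood of `K`, even when `X` is
not locally compact: along a sequence of violations `(xₙ, yₙ)` with `xₙ ∈ K` and
`dist xₙ yₙ → 0`, a subsequence of the `yₙ` together with its limit and `K` forms a compact set on
which `hdiv` is contradicted. Either of the two end points may be the one that returns to `K`. -/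
lemma exists_uniform_div {X : Type*} [MetricSpace X] {α : ℝ} {φ : ℝ → X → X}
    (hdiv : ∀ K : Set X, IsCompact K → ∃ C > 0, ∀ x ∈ K, ∀ y ∈ K, ∀ t : ℝ, 1 < t →
      φ t x ∈ K → dist (φ t x) (φ t y) ≤ C * t ^ α * dist x y)
    {K : Set X} (hK : IsCompact K) :
    ∃ C > 0, ∃ δ > 0, ∀ x ∈ K, ∀ y, dist x y < δ → ∀ t : ℝ, 1 < t →
      (φ t x ∈ K ∨ φ t y ∈ K) → dist (φ t x) (φ t y) ≤ C * t ^ α * dist x y := by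
  by_contra! H
  have H' : ∀ n : ℕ, ∃ x ∈ K, ∃ y, dist x y < 1 / ((n : ℝ) + 1) ∧ ∃ t : ℝ, 1 < t ∧
      (φ t x ∈ K ∨ φ t y ∈ K) ∧ ((n : ℝ) + 1) * t ^ α * dist x y < dist (φ t x) (φ t y) :=
    fun n => H _ (by positivity) _ (by positivity)
  choose x hxK y hxy t ht hor hlt using H'
  obtain ⟨a, -, k, hk, hka⟩ := hK.tendsto_subseq hxK
  have hd : Tendsto (fun n => dist ((x ∘ k) n) ((y ∘ k) n)) atTop (nhds 0) := by
    refine squeeze_zero (fun _ => dist_nonneg) (fun n => (hxy (k n)).le) ?_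
    exact tendsto_one_div_add_atTop_nhds_zero_nat.comp hk.tendsto_atTop
  have hya : Tendsto (y ∘ k) atTop (nhds a) := (tendsto_iff_of_dist hd).1 hka
  obtain ⟨C, hC, h⟩ := hdiv _ (hK.union hya.isCompact_insert_range)
  obtain ⟨n, hn⟩ := exists_nat_gt C
  have hxm : x (k n) ∈ K ∪ insert a (range (y ∘ k)) := Or.inl (hxK _)
  have hym : y (k n) ∈ K ∪ insert a (range (y ∘ k)) := Or.inr (Or.inr ⟨n, rfl⟩)
  have hkn : (n : ℝ) ≤ k n := by exact_mod_cast hk.id_le n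
  have key : dist (φ (t (k n)) (x (k n))) (φ (t (k n)) (y (k n))) ≤
      C * t (k n) ^ α * dist (x (k n)) (y (k n)) := by
    rcases hor (k n) with h1 | h1
    · exact h _ hxm _ hym _ (ht _) (Or.inl h1)
    · rw [dist_comm, dist_comm (x _)]
      exact h _ hym _ hxm _ (ht _) (Or.inl h1)
  have hle : C * t (k n) ^ α * dist (x (k n)) (y (k n)) ≤
      ((k n : ℝ) + 1) * t (k n) ^ α * dist (x (k n)) (y (k n)) := by
    have : 0 ≤ t (k n) ^ α := Real.rpow_nonneg (by linarith [ht (k n)]) _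
    gcongr
    linarith
  linarith [hlt (k n)]

/-! ### Coverings and Hausdorff measure -/

/-- Volume packing: if the `r`-balls centred on `B` have measure at least `v` and lie in a set of
measure at most `m`, then `B` is covered by at most `m / v` balls of radius `2 * r`, centred at a
`2 * r`-separated subset of maximal cardinality. -/
lemma exists_finset_cover {X : Type*} [MetricSpace X] [MeasurableSpace X] [BorelSpace X]
    (μ : Measure X) [IsFiniteMeasure μ] {B G : Set X} {r v m : ℝ} (hv : 0 < v)
    (hball : ∀ x ∈ B, ENNReal.ofReal v ≤ μ (ball x r)) (hG : ∀ x ∈ B, ball x r ⊆ G)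
    (hm : μ.real G ≤ m) :
    ∃ F : Finset X, B ⊆ ⋃ x ∈ F, ball x (2 * r) ∧ F.card * v ≤ m := by
  classical
  let good : Finset X → Prop := fun F =>
    (∀ x ∈ F, x ∈ B) ∧ ∀ x ∈ F, ∀ y ∈ F, x ≠ y → 2 * r ≤ dist x y
  have hcard : ∀ F, good F → F.card * v ≤ m := by
    intro F hF
    refine le_trans ?_ hm
    have hdisj : (F : Set X).PairwiseDisjoint (fun x => ball x r) := by
      intro x hx y hy hxy
      exact ball_disjoint_ball (by linarith [hF.2 x hx y hy hxy])
    have h1 : μ.real (⋃ x ∈ F, ball x r) = ∑ x ∈ F, μ.real (ball x r) :=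
      measureReal_biUnion_finset hdisj (fun _ _ => measurableSet_ball)
    have h2 : ∀ x ∈ F, v ≤ μ.real (ball x r) := fun x hx =>
      (ENNReal.ofReal_le_iff_le_toReal (measure_ne_top _ _)).1 (hball x (hF.1 x hx))
    calc F.card * v = ∑ x ∈ F, v := by simp
      _ ≤ ∑ x ∈ F, μ.real (ball x r) := Finset.sum_le_sum h2
      _ = μ.real (⋃ x ∈ F, ball x r) := h1.symm
      _ ≤ μ.real G := measureReal_mono (iUnion₂_subset fun x hx => hG x (hF.1 x hx))
  let N : Set ℕ := {n | ∃ F, good F ∧ F.card = n}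
  have hne : N.Nonempty := ⟨0, ∅, by simp [good], rfl⟩
  have hbdd : BddAbove N := by
    refine ⟨⌊m / v⌋₊, ?_⟩
    rintro n ⟨F, hF, rfl⟩
    exact Nat.le_floor ((le_div_iff₀ hv).2 (hcard F hF))
  obtain ⟨F, hF, hFN⟩ := Nat.sSup_mem hne hbdd
  refine ⟨F, fun x hx => ?_, hcard F hF⟩
  by_contra hcon
  simp only [mem_iUnion, mem_ball, not_exists, not_lt] at hcon
  by_cases hr : 0 < r
  · have hxF : x ∉ F := fun h => by
      have := hcon x h
      rw [dist_self] at this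
      linarith
    have hins : good (insert x F) := by
      constructor
      · intro y hy
        rcases Finset.mem_insert.1 hy with rfl | hy
        · exact hx
        · exact hF.1 y hy
      · intro y hy z hz hyz
        rcases Finset.mem_insert.1 hy with h1 | hy <;> rcases Finset.mem_insert.1 hz with h2 | hz
        · exact absurd (h1.trans h2.symm) hyz
        · rw [h1]; exact hcon z hz
        · rw [h2, dist_comm]; exact hcon y hy
        · exact hF.2 y hy z hz hyz
    have := le_csSup hbdd (show (insert x F).card ∈ N from ⟨_, hins, rfl⟩)
    rw [← hFN, Finset.card_insert_of_notMem hxF] at this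
    omega
  · have := hball x hx
    rw [ball_eq_empty.2 (not_lt.1 hr), measure_empty] at this
    exact absurd hv (not_lt.2 (ENNReal.ofReal_eq_zero.1 (le_antisymm this bot_le)))

open scoped NNReal ENNReal in
/-- Borel–Cantelli for Hausdorff measure: the upper limit of sets `B n` covered by finitely many
balls of radius `r n` with summable total `s`-cost is `μH[s]`-null. -/
lemma hausdorffMeasure_frequently_eq_zero {X : Type*} [MetricSpace X] [MeasurableSpace X]
    [BorelSpace X] {s : ℝ≥0} {B : ℕ → Set X} {r a : ℕ → ℝ}
    (hr0 : ∀ n, 0 ≤ r n) (hr : Antitone r) (hrt : Tendsto r atTop (nhds 0)) (ha : Summable a)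
    (hB : ∀ᶠ n in atTop, ∃ F : Finset X, B n ⊆ ⋃ x ∈ F, ball x (r n) ∧
      F.card * (2 * r n) ^ (s : ℝ) ≤ a n) :
    Measure.hausdorffMeasure (s : ℝ) {x | ∃ᶠ n in atTop, x ∈ B n} = 0 := by
  obtain ⟨N, hN⟩ := eventually_atTop.1 hB
  have hN' : ∀ n, ∃ F : Finset X, B (n + N) ⊆ ⋃ x ∈ F, ball x (r (n + N)) ∧
      F.card * (2 * r (n + N)) ^ (s : ℝ) ≤ a (n + N) := fun n => hN _ (by omega)
  choose F hF hFa using hN'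
  have hdiam : ∀ n (x : X), ediam (ball x (r n)) ≤ ENNReal.ofReal (2 * r n) := by
    intro n x
    rw [← Metric.eball_ofReal, ENNReal.ofReal_mul (by norm_num)]
    simpa using Metric.ediam_eball_le (x := x) (r := ENNReal.ofReal (r n))
  have hle := Measure.hausdorffMeasure_le_liminf_tsum (X := X) (β := ℕ) (l := atTop)
    (ι := fun m => Σ k : ℕ, (F (k + m) : Finset X)) (s : ℝ) {x | ∃ᶠ n in atTop, x ∈ B n}
    (fun m => ENNReal.ofReal (2 * r m))
    (by
      have := (hrt.const_mul 2)
      rw [mul_zero] at this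
      simpa using ENNReal.tendsto_ofReal this)
    (fun m i => ball (i.2 : X) (r (i.1 + m + N)))
    (Eventually.of_forall fun m i => (hdiam _ _).trans (ENNReal.ofReal_le_ofReal (by
      have := hr (show m ≤ i.1 + m + N by omega)
      linarith)))
    (Eventually.of_forall fun m x hx => by
      obtain ⟨n, hn, hxn⟩ := (frequently_atTop.1 hx) (m + N)
      obtain ⟨k, rfl⟩ : ∃ k, n = k + m + N := ⟨n - m - N, by omega⟩
      obtain ⟨y, hy, hxy⟩ := mem_iUnion₂.1 (hF (k + m) hxn)
      exact mem_iUnion.2 ⟨⟨k, y, hy⟩, hxy⟩)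
  have hsum : ∀ m, (∑' i : Σ k : ℕ, (F (k + m) : Finset X),
      ediam (ball (i.2 : X) (r (i.1 + m + N))) ^ (s : ℝ)) ≤
      ∑' k, ENNReal.ofReal (a (k + m + N)) := by
    intro m
    rw [ENNReal.tsum_sigma']
    refine ENNReal.tsum_le_tsum fun k => ?_
    calc _ ≤ ∑' i : (F (k + m) : Finset X), ENNReal.ofReal ((2 * r (k + m + N)) ^ (s : ℝ)) := by
          refine ENNReal.tsum_le_tsum fun i => ?_
          refine (ENNReal.rpow_le_rpow (hdiam _ _) s.2).trans (le_of_eq ?_)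
          exact ENNReal.ofReal_rpow_of_nonneg (by linarith [hr0 (k + m + N)]) s.2
      _ = ENNReal.ofReal ((F (k + m)).card * (2 * r (k + m + N)) ^ (s : ℝ)) := by
          rw [ENNReal.ofReal_mul (by positivity)]
          simp
      _ ≤ _ := ENNReal.ofReal_le_ofReal (hFa (k + m))
  have hfin : (∑' k, ENNReal.ofReal (a (k + N))) ≠ ∞ :=
    ((summable_nat_add_iff N).2 ha).tsum_ofReal_ne_top
  have htail := ENNReal.tendsto_sum_nat_add (fun k => ENNReal.ofReal (a (k + N))) hfin
  refine le_antisymm (hle.trans ?_) bot_le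
  rw [← htail.liminf_eq]
  exact liminf_le_liminf (Eventually.of_forall hsum)

/-! ### Mean-square bound for orbit integrals -/

lemma integral_sub_rpow {γ' a b : ℝ} (hγ1 : γ' < 1) :
    IntervalIntegrable (fun t => (t - a) ^ (-γ')) volume a b ∧
    ∫ t in a..b, (t - a) ^ (-γ') = (b - a) ^ (1 - γ') / (1 - γ') := by
  constructor
  · have := (intervalIntegral.intervalIntegrable_rpow' (a := 0) (b := b - a) (r := -γ')
      (by linarith)).comp_sub_right a
    simpa using this
  · rw [intervalIntegral.integral_comp_sub_right (fun u => u ^ (-γ')) a, sub_self,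
      integral_rpow (Or.inl (by linarith)), Real.zero_rpow (by linarith)]
    ring_nf

lemma integral_rpow_sub {γ' a b : ℝ} (hγ1 : γ' < 1) :
    IntervalIntegrable (fun t => (b - t) ^ (-γ')) volume a b ∧
    ∫ t in a..b, (b - t) ^ (-γ') = (b - a) ^ (1 - γ') / (1 - γ') := by
  constructor
  · have := ((intervalIntegral.intervalIntegrable_rpow' (a := 0) (b := b - a) (r := -γ')
      (by linarith)).comp_sub_left b).symm
    simpa using this
  · rw [intervalIntegral.integral_comp_sub_left (fun u => u ^ (-γ')) b, sub_self,
      integral_rpow (Or.inl (by linarith)), Real.zero_rpow (by linarith)]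
    ring_nf

/-- A function dominated by `D * |t - s| ^ (-γ')` on `(0, T]` has integral `O(T ^ (1 - γ'))`,
uniformly in `s ∈ [0, T]`. The interval is split at the singularity `t = s`. -/
lemma abs_integral_le_of_corr {c : ℝ → ℝ} {D γ' s T : ℝ} (hγ1 : γ' < 1)
    (hD : 0 ≤ D) (hs0 : 0 ≤ s) (hsT : s ≤ T)
    (hint : IntegrableOn c (Ioc 0 T))
    (hlt : ∀ t < s, |c t| ≤ D * (s - t) ^ (-γ')) (hgt : ∀ t > s, |c t| ≤ D * (t - s) ^ (-γ')) :
    |∫ t in Ioc 0 T, c t| ≤ 2 * D / (1 - γ') * T ^ (1 - γ') := by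
  have hT : 0 ≤ T := hs0.trans hsT
  have hi1 : IntervalIntegrable c volume 0 s :=
    (intervalIntegrable_iff_integrableOn_Ioc_of_le hs0).2
      (hint.mono_set (Ioc_subset_Ioc_right hsT))
  have hi2 : IntervalIntegrable c volume s T :=
    (intervalIntegrable_iff_integrableOn_Ioc_of_le hsT).2
      (hint.mono_set (Ioc_subset_Ioc_left hs0))
  rw [← intervalIntegral.integral_of_le hT,
    ← intervalIntegral.integral_add_adjacent_intervals hi1 hi2]
  have hmono : ∀ u, 0 ≤ u → u ≤ T → u ^ (1 - γ') ≤ T ^ (1 - γ') := fun u h0 h1 =>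
    Real.rpow_le_rpow h0 h1 (by linarith)
  have hne : ∀ᵐ t : ℝ, t ≠ s := by simp [ae_iff, measure_singleton]
  obtain ⟨j1, e1⟩ := integral_rpow_sub (a := 0) (b := s) hγ1
  obtain ⟨j2, e2⟩ := integral_sub_rpow (a := s) (b := T) hγ1
  have b1 : |∫ t in (0:ℝ)..s, c t| ≤ D * (T ^ (1 - γ') / (1 - γ')) := by
    have := intervalIntegral.norm_integral_le_of_norm_le (f := c) (μ := volume) hs0
      (g := fun t => D * (s - t) ^ (-γ'))
      (by filter_upwards [hne] with t h1 h2; exact hlt t (lt_of_le_of_ne h2.2 h1))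
      (j1.const_mul D)
    rw [intervalIntegral.integral_const_mul, e1] at this
    refine this.trans (mul_le_mul_of_nonneg_left ?_ hD)
    exact div_le_div_of_nonneg_right (hmono _ (by linarith) (by linarith)) (by linarith)
  have b2 : |∫ t in s..T, c t| ≤ D * (T ^ (1 - γ') / (1 - γ')) := by
    have := intervalIntegral.norm_integral_le_of_norm_le (f := c) (μ := volume) hsT
      (g := fun t => D * (t - s) ^ (-γ'))
      (by exact Eventually.of_forall fun t h2 => hgt t h2.1)
      (j2.const_mul D)
    rw [intervalIntegral.integral_const_mul, e2] at this
    refine this.trans (mul_le_mul_of_nonneg_left ?_ hD)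
    exact div_le_div_of_nonneg_right (hmono _ (by linarith) (by linarith)) (by linarith)
  calc _ ≤ _ := abs_add_le _ _
    _ ≤ _ := add_le_add b1 b2
    _ = _ := by ring

/-- The second moment of the orbit integral over `[0, T]` is `O(T ^ (2 - γ'))` for every
`γ' < 1` with `γ' ≤ γ`. By Fubini it is the double integral over `[0, T]²` of the correlation of
`g ∘ φ s` and `g ∘ φ t`, which depends only on `|t - s|` by invariance and is
`O(|t - s| ^ (-γ'))` by mixing. -/
lemma exists_integral_sq_le {X : Type*} [MeasurableSpace X]
    {φ : ℝ → X → X} (hφadd : ∀ s t : ℝ, ∀ x, φ (s + t) x = φ s (φ t x))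
    (hφmeas : Measurable fun p : ℝ × X => φ p.1 p.2)
    {μ : Measure X} [IsProbabilityMeasure μ] (hinv : ∀ t : ℝ, MeasurePreserving (φ t) μ μ)
    {g : X → ℝ} (hg : Measurable g) {M : ℝ} (hM : ∀ x, |g x| ≤ M) {C γ γ' : ℝ} (hC : 0 < C)
    (hmix : ∀ t : ℝ, 1 < t → |∫ x, g x * g (φ t x) ∂μ| ≤ C * t ^ (-γ))
    (hγ0 : 0 < γ') (hγ1 : γ' < 1) (hγ : γ' ≤ γ) :
    ∃ D > 0, ∀ T > 0, ∫ x, (∫ t in Ioc 0 T, g (φ t x)) ^ 2 ∂μ ≤ D * T ^ (2 - γ') := by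
  have hgφ : Measurable fun p : ℝ × X => g (φ p.1 p.2) := hg.comp hφmeas
  have hM0 : 0 ≤ M := by
    obtain ⟨x⟩ : Nonempty X := by
      by_contra h
      rw [not_nonempty_iff] at h
      exact IsProbabilityMeasure.ne_zero μ (Measure.eq_zero_of_isEmpty μ)
    exact (abs_nonneg _).trans (hM x)
  set D := M ^ 2 + C with hDdef
  have hD : 0 < D := by positivity
  have hbd : ∀ x y, |g x * g y| ≤ M ^ 2 := fun x y => by
    rw [abs_mul, sq]
    exact mul_le_mul (hM x) (hM y) (abs_nonneg _) hM0
  have hcbd : ∀ s t, |∫ x, g (φ s x) * g (φ t x) ∂μ| ≤ M ^ 2 := fun s t => by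
    have := norm_integral_le_of_norm_le_const (μ := μ) (f := fun x => g (φ s x) * g (φ t x))
      (C := M ^ 2) (Eventually.of_forall fun x => hbd _ _)
    simpa using this
  have hstat : ∀ s u, ∫ x, g (φ s x) * g (φ (u + s) x) ∂μ = ∫ x, g x * g (φ u x) ∂μ := by
    intro s u
    simp_rw [hφadd u s]
    have hm : Measurable fun x => g x * g (φ u x) :=
      hg.mul (hg.comp (hinv u).measurable)
    conv_rhs => rw [← (hinv s).map_eq]
    rw [integral_map (hinv s).measurable.aemeasurable hm.aestronglyMeasurable]
  have hcorr : ∀ u > 0, |∫ x, g x * g (φ u x) ∂μ| ≤ D * u ^ (-γ') := by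
    intro u hu
    by_cases h1 : 1 < u
    · calc _ ≤ C * u ^ (-γ) := hmix u h1
        _ ≤ D * u ^ (-γ') := by
          gcongr
          · linarith [sq_nonneg M]
          · exact h1.le
    · have h2 : (1:ℝ) ≤ u ^ (-γ') :=
        Real.one_le_rpow_of_pos_of_le_one_of_nonpos hu (not_lt.1 h1) (by linarith)
      have h3 : |∫ x, g x * g (φ u x) ∂μ| ≤ M ^ 2 := by
        have := norm_integral_le_of_norm_le_const (μ := μ) (f := fun x => g x * g (φ u x))
          (C := M ^ 2) (Eventually.of_forall fun x => hbd _ _)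
        simpa using this
      nlinarith [sq_nonneg M]
  refine ⟨2 * D / (1 - γ'), div_pos (by linarith) (by linarith), fun T hT => ?_⟩
  set ν : Measure ℝ := volume.restrict (Ioc 0 T) with hν
  have hfull : Measurable fun p : X × (ℝ × ℝ) => g (φ p.2.1 p.1) * g (φ p.2.2 p.1) :=
    (hgφ.comp (measurable_snd.fst.prodMk measurable_fst)).mul
      (hgφ.comp (measurable_snd.snd.prodMk measurable_fst))
  have hintfull : Integrable (Function.uncurry
      fun (x : X) (z : ℝ × ℝ) => g (φ z.1 x) * g (φ z.2 x)) (μ.prod (ν.prod ν)) :=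
    Integrable.of_bound (C := M ^ 2) hfull.aestronglyMeasurable
      (Eventually.of_forall fun p => hbd _ _)
  have hsq : ∀ x, (∫ t, g (φ t x) ∂ν) ^ 2 =
      ∫ z : ℝ × ℝ, g (φ z.1 x) * g (φ z.2 x) ∂(ν.prod ν) := fun x => by
    rw [integral_prod_mul (fun t => g (φ t x)) (fun t => g (φ t x)), sq]
  simp_rw [hsq]
  rw [integral_integral_swap hintfull]
  have hcint : Integrable (fun z : ℝ × ℝ => ∫ x, g (φ z.1 x) * g (φ z.2 x) ∂μ) (ν.prod ν) :=
    hintfull.integral_prod_right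
  rw [integral_prod _ hcint]
  have hcmeas : StronglyMeasurable fun z : ℝ × ℝ => ∫ x, g (φ z.1 x) * g (φ z.2 x) ∂μ :=
    hfull.stronglyMeasurable.integral_prod_left'
  have hinner : ∀ s ∈ Ioc 0 T, ‖∫ t, (∫ x, g (φ s x) * g (φ t x) ∂μ) ∂ν‖ ≤
      2 * D / (1 - γ') * T ^ (1 - γ') := by
    intro s hs
    refine abs_integral_le_of_corr (s := s) hγ1 hD.le hs.1.le hs.2 ?_ ?_ ?_
    · refine Integrable.of_bound (C := M ^ 2)
        (hcmeas.comp_measurable measurable_prodMk_left).aestronglyMeasurable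
        (Eventually.of_forall fun t => hcbd s t)
    · intro t ht
      have := hstat t (s - t)
      rw [sub_add_cancel] at this
      simp_rw [mul_comm (g (φ s _))]
      rw [this]
      exact hcorr _ (by linarith)
    · intro t ht
      have := hstat s (t - s)
      rw [sub_add_cancel] at this
      rw [this]
      exact hcorr _ (by linarith)
  have hout := norm_integral_le_of_norm_le_const (μ := ν)
    (f := fun s => ∫ t, (∫ x, g (φ s x) * g (φ t x) ∂μ) ∂ν)
    (C := 2 * D / (1 - γ') * T ^ (1 - γ'))
    ((ae_restrict_iff' measurableSet_Ioc).2 (Eventually.of_forall hinner))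
  refine (le_abs_self _).trans (hout.trans (le_of_eq ?_))
  have hreal : ν.real univ = T := by simp [hν, measureReal_def, hT.le]
  rw [hreal, mul_assoc]
  congr 1
  rw [show (2 - γ') = (1 - γ') + 1 by ring, Real.rpow_add hT, Real.rpow_one]

/-! ### Deviations of orbit integrals -/

lemma intervalIntegrable_orbit {X : Type*} [MeasurableSpace X] {φ : ℝ → X → X}
    (hφmeas : Measurable fun p : ℝ × X => φ p.1 p.2) {g : X → ℝ} (hg : Measurable g) {M : ℝ}
    (hM : ∀ x, |g x| ≤ M) (x : X) (a b : ℝ) :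
    IntervalIntegrable (fun t => g (φ t x)) volume a b := by
  have hm : Measurable fun t => g (φ t x) := hg.comp (hφmeas.comp measurable_prodMk_right)
  rw [intervalIntegrable_iff, uIoc]
  exact Integrable.of_bound (C := M) hm.aestronglyMeasurable (Eventually.of_forall fun t => hM _)

/-- Points at distance less than `κ * T ^ (-α)` have orbit integrals over `[0, T]` within
`ε / 4 * T`. For `t > 1` the integrands differ only if one of the two orbits is in `Q`, and then
`exists_uniform_div` applies; times `t ≤ 1` contribute at most `2 * M`. -/
lemma exists_orbit_integral_close {X : Type*} [MetricSpace X] [MeasurableSpace X] {α : ℝ}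
    (hα : 0 < α) {φ : ℝ → X → X} (hφmeas : Measurable fun p : ℝ × X => φ p.1 p.2)
    (hdiv : ∀ K : Set X, IsCompact K → ∃ C > 0, ∀ x ∈ K, ∀ y ∈ K, ∀ t : ℝ, 1 < t →
      φ t x ∈ K → dist (φ t x) (φ t y) ≤ C * t ^ α * dist x y)
    {g : X → ℝ} (hg : Measurable g) {M : ℝ} (hM : ∀ x, |g x| ≤ M)
    {L : NNReal} (hL : LipschitzWith L g) {Q : Set X} (hQ : IsCompact Q)
    (hgQ : ∀ x ∉ Q, ∀ y ∉ Q, g x = g y) {K : Set X} (hK : IsCompact K) {ε : ℝ} (hε : 0 < ε) :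
    ∃ κ > 0, ∃ T₀ : ℝ, ∀ T, T₀ ≤ T → ∀ x ∈ K, ∀ y, dist x y < κ * T ^ (-α) →
      |(∫ t in (0:ℝ)..T, g (φ t x)) - ∫ t in (0:ℝ)..T, g (φ t y)| ≤ ε / 4 * T := by
  obtain ⟨C, hC, δ, hδ, h⟩ := exists_uniform_div hdiv (hK.union hQ)
  have hLC : 0 < (L : ℝ) * C + 1 := by positivity
  refine ⟨min δ (ε / 8 / (L * C + 1)), by positivity, max 1 (16 * M / ε), ?_⟩
  intro T hT x hx y hxy
  set κ := min δ (ε / 8 / (L * C + 1)) with hκ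
  have hκ0 : 0 < κ := by positivity
  have hT1 : 1 ≤ T := (le_max_left _ _).trans hT
  have hT0 : 0 < T := by linarith
  have hTM : 16 * M ≤ T * ε := (div_le_iff₀ hε).1 ((le_max_right _ _).trans hT)
  have hd : dist x y < δ := by
    have : T ^ (-α) ≤ 1 := Real.rpow_le_one_of_one_le_of_nonpos hT1 (by linarith)
    calc dist x y < κ * T ^ (-α) := hxy
      _ ≤ κ * 1 := by gcongr
      _ ≤ δ := by rw [mul_one]; exact min_le_left _ _
  have hκL : L * C * κ ≤ ε / 8 := by
    have h1 : κ * (L * C + 1) ≤ ε / 8 := (le_div_iff₀ hLC).1 (min_le_right _ _)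
    nlinarith
  have hI : ∀ a b, IntervalIntegrable (fun t => g (φ t x) - g (φ t y)) volume a b := fun a b =>
    (intervalIntegrable_orbit hφmeas hg hM x a b).sub (intervalIntegrable_orbit hφmeas hg hM y a b)
  rw [← intervalIntegral.integral_sub (intervalIntegrable_orbit hφmeas hg hM x 0 T)
    (intervalIntegrable_orbit hφmeas hg hM y 0 T),
    ← intervalIntegral.integral_add_adjacent_intervals (hI 0 1) (hI 1 T)]
  have b1 : |∫ t in (0:ℝ)..1, (g (φ t x) - g (φ t y))| ≤ 2 * M := by
    have := intervalIntegral.norm_integral_le_of_norm_le_const (a := 0) (b := 1) (C := 2 * M)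
      (f := fun t => g (φ t x) - g (φ t y)) (fun t _ => by
        refine (norm_sub_le _ _).trans ?_
        have h1 := hM (φ t x)
        have h2 := hM (φ t y)
        simp only [Real.norm_eq_abs]
        linarith)
    simpa using this
  have b2 : |∫ t in (1:ℝ)..T, (g (φ t x) - g (φ t y))| ≤ ε / 8 * T := by
    have := intervalIntegral.norm_integral_le_of_norm_le_const (a := 1) (b := T) (C := ε / 8)
      (f := fun t => g (φ t x) - g (φ t y)) (fun t ht => by
        rw [uIoc_of_le hT1] at ht
        by_cases hor : φ t x ∈ K ∪ Q ∨ φ t y ∈ K ∪ Q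
        · have hdt := h x (Or.inl hx) y hd t ht.1 hor
          have ht0 : 0 < t := by linarith [ht.1]
          calc ‖g (φ t x) - g (φ t y)‖ ≤ L * dist (φ t x) (φ t y) := hL.dist_le_mul _ _
            _ ≤ L * (C * t ^ α * dist x y) := by gcongr
            _ ≤ L * (C * T ^ α * (κ * T ^ (-α))) := by
              gcongr
              exact ht.2
            _ = L * C * κ * (T ^ α * T ^ (-α)) := by ring
            _ = L * C * κ := by
              rw [← Real.rpow_add hT0, add_neg_cancel, Real.rpow_zero, mul_one]
            _ ≤ ε / 8 := hκL
        · push Not at hor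
          rw [hgQ _ (fun hq => hor.1 (Or.inr hq)) _ (fun hq => hor.2 (Or.inr hq)), sub_self,
            norm_zero]
          positivity)
    refine this.trans ?_
    rw [abs_of_nonneg (by linarith)]
    gcongr
    linarith
  refine (abs_add_le _ _).trans ?_
  linarith

/-- Large deviations at arbitrarily large times persist, with `ε` halved, along a geometric sequence
of times: the ratio is chosen so that an orbit integral changes by at most `ε / 2 * q ^ n` on
`[q ^ n, q ^ (n + 1)]`. -/
lemma frequently_pow_of_frequently {X : Type*} [MeasurableSpace X] {φ : ℝ → X → X}
    (hφmeas : Measurable fun p : ℝ × X => φ p.1 p.2) {g : X → ℝ} (hg : Measurable g) {M : ℝ}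
    (hM0 : 0 < M) (hM : ∀ x, |g x| ≤ M) {ε : ℝ} (hε : 0 < ε) {x : X}
    (hx : ∃ᶠ T : ℝ in atTop, ε * T < |∫ t in (0:ℝ)..T, g (φ t x)|) :
    ∃ᶠ n : ℕ in atTop, ε / 2 * (1 + ε / (2 * M)) ^ n <
      |∫ t in (0:ℝ)..(1 + ε / (2 * M)) ^ n, g (φ t x)| := by
  set q := 1 + ε / (2 * M) with hq
  have hq1 : 1 < q := by
    have : 0 < ε / (2 * M) := by positivity
    linarith
  have hqM : M * (q - 1) = ε / 2 := by
    rw [hq]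
    field_simp
    ring
  rw [frequently_atTop]
  intro N
  obtain ⟨T, hTN, hT⟩ := (frequently_atTop.1 hx) (q ^ N)
  have hT1 : 1 ≤ T := (one_le_pow₀ hq1.le).trans hTN
  obtain ⟨n, hn1, hn2⟩ := exists_nat_pow_near hT1 hq1
  refine ⟨n, ?_, ?_⟩
  · have := (pow_lt_pow_iff_right₀ hq1).1 (hTN.trans_lt hn2)
    omega
  · have hqn : 0 < q ^ n := by positivity
    have hsub := intervalIntegral.integral_interval_sub_left
      (intervalIntegrable_orbit hφmeas hg hM x 0 T)
      (intervalIntegrable_orbit hφmeas hg hM x 0 (q ^ n))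
    have hb : |∫ t in (q ^ n)..T, g (φ t x)| ≤ M * |T - q ^ n| :=
      intervalIntegral.norm_integral_le_of_norm_le_const (f := fun t => g (φ t x)) fun t _ => hM _
    rw [abs_of_nonneg (by linarith : 0 ≤ T - q ^ n)] at hb
    have hb2 : M * (T - q ^ n) ≤ ε / 2 * q ^ n := by
      rw [← hqM, mul_assoc]
      gcongr
      rw [pow_succ] at hn2
      linarith
    have habs := abs_sub_abs_le_abs_sub (∫ t in (0:ℝ)..T, g (φ t x))
      (∫ t in (0:ℝ)..(q ^ n), g (φ t x))
    rw [hsub] at habs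
    have : ε * q ^ n ≤ ε * T := by gcongr
    linarith

/-- The points of `K` whose orbit averages of `g` exceed `ε` in absolute value at
arbitrarily large times form a `μH[s]`-null set when `s > β - γ' / α`. At time `T = q ^ n` these points are covered by
`O(T ^ (α * β - γ'))` balls of radius comparable to `T ^ (-α)`, and the resulting `s`-costs form a
convergent geometric series. -/
lemma hausdorffMeasure_large_deviation_eq_zero {X : Type*} [MetricSpace X] [MeasurableSpace X]
    [BorelSpace X] {α : ℝ} (hα : 0 < α) {φ : ℝ → X → X}
    (hφadd : ∀ s t : ℝ, ∀ x, φ (s + t) x = φ s (φ t x))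
    (hφmeas : Measurable fun p : ℝ × X => φ p.1 p.2)
    (hdiv : ∀ K : Set X, IsCompact K → ∃ C > 0, ∀ x ∈ K, ∀ y ∈ K, ∀ t : ℝ, 1 < t →
      φ t x ∈ K → dist (φ t x) (φ t y) ≤ C * t ^ α * dist x y)
    {β : ℝ} {μ : Measure X} [IsProbabilityMeasure μ]
    (hinv : ∀ t : ℝ, MeasurePreserving (φ t) μ μ)
    (hunif : ∀ K : Set X, IsCompact K → ∃ c > 0, ∃ r₀ > 0, ∀ x ∈ K, ∀ r : ℝ, 0 < r → r < r₀ →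
      ENNReal.ofReal (c * r ^ β) ≤ μ (Metric.ball x r))
    {g : X → ℝ} {M : ℝ} (hM0 : 0 < M) (hM : ∀ x, |g x| ≤ M)
    {L : NNReal} (hL : LipschitzWith L g) {Q : Set X} (hQ : IsCompact Q)
    (hgQ : ∀ x ∉ Q, ∀ y ∉ Q, g x = g y) {C γ γ' : ℝ} (hC : 0 < C)
    (hmix : ∀ t : ℝ, 1 < t → |∫ x, g x * g (φ t x) ∂μ| ≤ C * t ^ (-γ))
    (hγ0 : 0 < γ') (hγ1 : γ' < 1) (hγ : γ' ≤ γ) {s : NNReal} (hs : α * (β - s) < γ')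
    {K : Set X} (hK : IsCompact K) {ε : ℝ} (hε : 0 < ε) :
    Measure.hausdorffMeasure (s : ℝ)
      {x | x ∈ K ∧ ∃ᶠ T : ℝ in atTop, ε * T < |∫ t in (0:ℝ)..T, g (φ t x)|} = 0 := by
  have hg : Measurable g := hL.continuous.measurable
  obtain ⟨D, hD, hL2⟩ := exists_integral_sq_le hφadd hφmeas hinv hg hM hC hmix hγ0 hγ1 hγ
  obtain ⟨κ, hκ, T₀, hclose⟩ :=
    exists_orbit_integral_close hα hφmeas hdiv hg hM hL hQ hgQ hK hε
  obtain ⟨c, hc, r₀, hr₀, hball⟩ := hunif K hK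
  set q := 1 + ε / (2 * M) with hq
  have hq1 : 1 < q := by
    have : 0 < ε / (2 * M) := by positivity
    linarith
  have hq0 : 0 < q := by linarith
  set J : ℝ → X → ℝ := fun T x => ∫ t in (0:ℝ)..T, g (φ t x) with hJ
  set r : ℕ → ℝ := fun n => κ * (q ^ n) ^ (-α) with hrdef
  have hrpos : ∀ n, 0 < r n := fun n => by positivity
  have hqt : Tendsto (fun n : ℕ => q ^ n) atTop atTop := tendsto_pow_atTop_atTop_of_one_lt hq1
  have hrt : Tendsto r atTop (nhds 0) := by
    have := ((tendsto_rpow_neg_atTop hα).comp hqt).const_mul κ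
    rw [mul_zero] at this
    exact this
  have hranti : Antitone r := by
    intro m n hmn
    have h1 : q ^ m ≤ q ^ n := pow_le_pow_right₀ hq1.le hmn
    exact mul_le_mul_of_nonneg_left
      (Real.rpow_le_rpow_of_nonpos (by positivity) h1 (by linarith)) hκ.le
  set η := γ' + α * s - α * β with hη
  have hη0 : 0 < η := by rw [hη]; nlinarith
  set A : ℝ := (16 * D / ε ^ 2) / (c * κ ^ β) * (4 * κ) ^ (s : ℝ) with hA
  have hsum : Summable fun n : ℕ => A * (q ^ (-η)) ^ n := by
    refine (summable_geometric_of_lt_one (by positivity) ?_).mul_left A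
    exact Real.rpow_lt_one_of_one_lt_of_neg hq1 (by linarith)
  have hmain := hausdorffMeasure_frequently_eq_zero (s := s)
    (B := fun n => {x | x ∈ K ∧ ε / 2 * q ^ n < |J (q ^ n) x|}) (r := fun n => 2 * r n)
    (fun n => by have := hrpos n; positivity) (fun m n hmn => by
      have := hranti hmn
      dsimp only
      linarith)
    (by simpa using hrt.const_mul 2) hsum ?_
  · refine measure_mono_null ?_ hmain
    rintro x ⟨hxK, hx⟩
    have := frequently_pow_of_frequently hφmeas hg hM0 hM hε hx
    exact this.mono fun n hn => ⟨hxK, hn⟩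
  · filter_upwards [hqt.eventually_ge_atTop T₀, hrt.eventually_lt_const hr₀] with n hnT hnr
    set T := q ^ n with hTdef
    have hT : 0 < T := by positivity
    -- `G` contains the balls of radius `r n` around the points with deviation above `ε / 2`, and
    -- its measure is controlled by Chebyshev's inequality.
    set G : Set X := {y | (ε / 4 * T) ^ 2 ≤ (J T y) ^ 2} with hG
    have hJmeas : Measurable (J T) := by
      have hgφ : Measurable fun p : X × ℝ => g (φ p.2 p.1) :=
        hg.comp (hφmeas.comp measurable_swap)
      have : J T = fun x => ∫ t in Ioc 0 T, g (φ t x) := by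
        funext x
        exact intervalIntegral.integral_of_le hT.le
      rw [this]
      exact hgφ.stronglyMeasurable.integral_prod_right'.measurable
    have hJbd : ∀ x, |J T x| ≤ M * T := fun x => by
      have := intervalIntegral.norm_integral_le_of_norm_le_const (a := 0) (b := T) (C := M)
        (f := fun t => g (φ t x)) fun t _ => hM _
      simpa [abs_of_pos hT] using this
    have hJint : Integrable (fun x => (J T x) ^ 2) μ := by
      refine Integrable.of_bound (C := (M * T) ^ 2) (hJmeas.pow_const 2).aestronglyMeasurable
        (Eventually.of_forall fun x => ?_)
      rw [norm_pow]
      exact pow_le_pow_left₀ (norm_nonneg _) (hJbd x) 2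
    have hJ2 : ∫ x, (J T x) ^ 2 ∂μ ≤ D * T ^ (2 - γ') := by
      have := hL2 T hT
      simpa only [hJ, intervalIntegral.integral_of_le hT.le] using this
    have hGm : μ.real G ≤ 16 * D / ε ^ 2 * T ^ (-γ') := by
      have h1 := mul_meas_ge_le_integral_of_nonneg
        (Eventually.of_forall fun x => sq_nonneg (J T x)) hJint ((ε / 4 * T) ^ 2)
      have h2 : (ε / 4 * T) ^ 2 * μ.real G ≤ D * T ^ (2 - γ') := h1.trans hJ2
      have h3 : T ^ (2 - γ') = T ^ 2 * T ^ (-γ') := by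
        rw [sub_eq_add_neg, Real.rpow_add hT]
        norm_cast
      have h4 : (ε / 4 * T) ^ 2 * (16 * D / ε ^ 2 * T ^ (-γ')) = D * T ^ (2 - γ') := by
        rw [h3]
        field_simp
        ring
      rw [← h4] at h2
      exact le_of_mul_le_mul_left h2 (by positivity)
    have hv : 0 < c * r n ^ β := by have := hrpos n; positivity
    obtain ⟨F, hF, hcard⟩ := exists_finset_cover μ
      (B := {x | x ∈ K ∧ ε / 2 * T < |J T x|}) (G := G) (r := r n) hv
      (fun x hx => hball x hx.1 (r n) (hrpos n) hnr)
      (fun x hx y hy => by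
        rw [mem_ball, dist_comm] at hy
        have h1 := hclose T hnT x hx.1 y hy
        have h2 := abs_sub_abs_le_abs_sub (J T x) (J T y)
        have h3 : ε / 4 * T ≤ |J T y| := by
          have h4 := hx.2
          have h5 : |J T x - J T y| ≤ ε / 4 * T := h1
          linarith
        change (ε / 4 * T) ^ 2 ≤ (J T y) ^ 2
        rw [← sq_abs (J T y)]
        exact pow_le_pow_left₀ (by positivity) h3 2) hGm
    refine ⟨F, hF, ?_⟩
    have hcard' : (F.card : ℝ) ≤ 16 * D / ε ^ 2 * T ^ (-γ') / (c * r n ^ β) :=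
      (le_div_iff₀ hv).2 hcard
    have hrn : r n = κ * T ^ (-α) := rfl
    have hrβ : r n ^ β = κ ^ β * T ^ (-α * β) := by
      rw [hrn, Real.mul_rpow hκ.le (by positivity), ← Real.rpow_mul hT.le]
    have hrs : (2 * (2 * r n)) ^ (s : ℝ) = (4 * κ) ^ (s : ℝ) * T ^ (-α * s) := by
      rw [hrn, show 2 * (2 * (κ * T ^ (-α))) = (4 * κ) * T ^ (-α) by ring,
        Real.mul_rpow (by positivity) (by positivity), ← Real.rpow_mul hT.le]
    have hTη : (q ^ (-η)) ^ n = T ^ (-η) := by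
      rw [hTdef, ← Real.rpow_natCast, ← Real.rpow_mul hq0.le, ← Real.rpow_natCast q n,
        ← Real.rpow_mul hq0.le, mul_comm]
    have hexp : T ^ (-η) = T ^ (-γ') * (T ^ (-α * β))⁻¹ * T ^ (-α * s) := by
      rw [← Real.rpow_neg hT.le, ← Real.rpow_add hT, ← Real.rpow_add hT, hη]
      congr 1
      ring
    rw [hrs, hTη, hexp]
    calc (F.card : ℝ) * ((4 * κ) ^ (s : ℝ) * T ^ (-α * s))
        ≤ 16 * D / ε ^ 2 * T ^ (-γ') / (c * r n ^ β) * ((4 * κ) ^ (s : ℝ) * T ^ (-α * s)) := by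
          gcongr
      _ = _ := by
          rw [hrβ, hA]
          field_simp

/-! ### Reduction to a dense family -/

lemma tendsto_flowAvg_of_dense {X : Type*} [MetricSpace X] [MeasurableSpace X] [BorelSpace X]
    {φ : ℝ → X → X} (hφmeas : Measurable fun p : ℝ × X => φ p.1 p.2)
    {μ : Measure X} [IsProbabilityMeasure μ] {S : Set (X → ℝ)}
    (hSLip : ∀ f ∈ S, (∃ L : NNReal, LipschitzWith L f) ∧ HasCompactSupport f)
    (hSdense : ∀ f : X → ℝ, Continuous f → HasCompactSupport f → ∀ ε : ℝ, 0 < ε →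
      ∃ g ∈ S, ∀ x, |f x - g x| < ε)
    {x : X} (hx : ∀ g ∈ S, Tendsto (fun T => flowAvg φ g T x) atTop (nhds (∫ y, g y ∂μ)))
    {f : X → ℝ} (hf : Continuous f) (hfc : HasCompactSupport f) :
    Tendsto (fun T => flowAvg φ f T x) atTop (nhds (∫ y, f y ∂μ)) := by
  have hbdd : ∀ h : X → ℝ, Continuous h → HasCompactSupport h → ∃ M, ∀ x, |h x| ≤ M :=
    fun h hc hs => hs.exists_bound_of_continuous hc
  rw [Metric.tendsto_atTop]
  intro ε hε
  obtain ⟨g, hgS, hfg⟩ := hSdense f hf hfc (ε / 3) (by positivity)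
  obtain ⟨⟨L, hL⟩, hgc⟩ := hSLip g hgS
  obtain ⟨M₁, hM₁⟩ := hbdd f hf hfc
  obtain ⟨M₂, hM₂⟩ := hbdd g hL.continuous hgc
  obtain ⟨N, hN⟩ := (Metric.tendsto_atTop.1 (hx g hgS)) (ε / 3) (by positivity)
  refine ⟨max N 1, fun T hT => ?_⟩
  have hT0 : 0 < T := by linarith [(le_max_right N 1).trans hT]
  have h1 := hN T ((le_max_left _ _).trans hT)
  have h2 : |flowAvg φ f T x - flowAvg φ g T x| ≤ ε / 3 := by
    rw [flowAvg, flowAvg, ← mul_sub, ← intervalIntegral.integral_sub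
      (intervalIntegrable_orbit hφmeas hf.measurable hM₁ x 0 T)
      (intervalIntegrable_orbit hφmeas hL.continuous.measurable hM₂ x 0 T), abs_mul]
    have := intervalIntegral.norm_integral_le_of_norm_le_const (a := 0) (b := T) (C := ε / 3)
      (f := fun t => f (φ t x) - g (φ t x)) (fun t _ => (hfg _).le)
    rw [sub_zero, Real.norm_eq_abs, abs_of_pos hT0] at this
    rw [abs_of_pos (by positivity : 0 < 1 / T)]
    calc 1 / T * |∫ t in (0:ℝ)..T, (f (φ t x) - g (φ t x))| ≤ 1 / T * (ε / 3 * T) := by gcongr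
      _ = ε / 3 := by field_simp
  have h3 : |(∫ y, g y ∂μ) - ∫ y, f y ∂μ| ≤ ε / 3 := by
    rw [← integral_sub
      (Integrable.of_bound (C := M₂) hL.continuous.measurable.aestronglyMeasurable
        (Eventually.of_forall hM₂))
      (Integrable.of_bound (C := M₁) hf.measurable.aestronglyMeasurable
        (Eventually.of_forall hM₁))]
    have := norm_integral_le_of_norm_le_const (μ := μ) (f := fun y => g y - f y) (C := ε / 3)
      (Eventually.of_forall fun y => by
        rw [Real.norm_eq_abs, abs_sub_comm]
        exact (hfg y).le)
    simpa using this
  rw [Real.dist_eq] at h1 ⊢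
  rw [abs_lt] at h1 ⊢
  rw [abs_le] at h2 h3
  constructor <;> linarith [h1.1, h1.2, h2.1, h2.2, h3.1, h3.2]


theorem dimH_nonequidistributing_points_le
    {X : Type*} [MetricSpace X] [SigmaCompactSpace X] [MeasurableSpace X] [BorelSpace X]
    (α : ℝ) (hα : 0 < α)
    (φ : ℝ → X → X)
    (hφ0 : ∀ x, φ 0 x = x)
    (hφadd : ∀ s t : ℝ, ∀ x, φ (s + t) x = φ s (φ t x))
    (hφmeas : Measurable fun p : ℝ × X => φ p.1 p.2)
    (hdiv : ∀ K : Set X, IsCompact K → ∃ C > 0, ∀ x ∈ K, ∀ y ∈ K, ∀ t : ℝ, 1 < t →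
      φ t x ∈ K → dist (φ t x) (φ t y) ≤ C * t ^ α * dist x y)
    (β : ℝ) (hβ : 0 < β)
    (μ : Measure X) [IsProbabilityMeasure μ]
    (hinv : ∀ t : ℝ, MeasurePreserving (φ t) μ μ)
    (hunif : ∀ K : Set X, IsCompact K → ∃ c > 0, ∃ r₀ > 0, ∀ x ∈ K, ∀ r : ℝ, 0 < r → r < r₀ →
      ENNReal.ofReal (c * r ^ β) ≤ μ (Metric.ball x r))
    (γ : ℝ) (hγ : 0 < γ)
    (S : Set (X → ℝ)) (hScount : S.Countable)
    (hSLip : ∀ f ∈ S, (∃ L : NNReal, LipschitzWith L f) ∧ HasCompactSupport f)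
    (hSdense : ∀ f : X → ℝ, Continuous f → HasCompactSupport f → ∀ ε : ℝ, 0 < ε →
      ∃ g ∈ S, ∀ x, |f x - g x| < ε)
    (hmix : ∀ f ∈ S, ∃ C > 0, ∀ t : ℝ, 1 < t →
      |∫ x, (f x - ∫ y, f y ∂μ) * (f (φ t x) - ∫ y, f y ∂μ) ∂μ| ≤ C * t ^ (-γ)) :
    dimH {x : X | ∃ f : X → ℝ, Continuous f ∧ HasCompactSupport f ∧
        0 < Filter.limsup (fun T : ℝ => |flowAvg φ f T x - ∫ y, f y ∂μ|) Filter.atTop} ≤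
      ENNReal.ofReal (β - α⁻¹ * min 1 γ) := by
  have hSdim : ∀ s : NNReal, ENNReal.ofReal (β - α⁻¹ * min 1 γ) < s → ∀ f ∈ S,
      dimH {x : X | ¬ Tendsto (fun T => flowAvg φ f T x) atTop (nhds (∫ y, f y ∂μ))} ≤ s := by
    intro s hs f hfS
    obtain ⟨⟨L, hL⟩, hfc⟩ := hSLip f hfS
    obtain ⟨C, hC, hCmix⟩ := hmix f hfS
    obtain ⟨M, hM⟩ := hfc.exists_bound_of_continuous hL.continuous
    set m := ∫ y, f y ∂μ with hm
    have hs' : β - α⁻¹ * min 1 γ < s := by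
      rw [← ENNReal.ofReal_coe_nnreal] at hs
      exact (ENNReal.ofReal_lt_ofReal_iff'.1 hs).1
    have hmin : 0 < min 1 γ := by positivity
    have hlt : α * (β - s) < min 1 γ := by
      have h1 : β - s < α⁻¹ * min 1 γ := by linarith
      calc α * (β - s) < α * (α⁻¹ * min 1 γ) := by gcongr
        _ = min 1 γ := by field_simp
    -- A rate strictly below `min 1 γ` avoids the logarithm at `γ = 1`; taking it positive makes the
    -- case of a negative bound `β - α⁻¹ * min 1 γ` no exception.
    obtain ⟨γ', hγl, hγu⟩ := exists_between (max_lt hlt hmin)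
    have hγ1 : γ' < 1 := hγu.trans_le (min_le_left _ _)
    have hγγ : γ' ≤ γ := (hγu.trans_le (min_le_right _ _)).le
    have hγ0 : 0 < γ' := (le_max_right _ _).trans_lt hγl
    have hsγ : α * (β - s) < γ' := (le_max_left _ _).trans_lt hγl
    set g : X → ℝ := fun x => f x - m with hg
    have hLg : LipschitzWith L g := by
      simpa [hg] using hL.sub (LipschitzWith.const m)
    have hMg : ∀ x, |g x| ≤ |M| + |m| + 1 := fun x => by
      have h1 : |f x| ≤ M := hM x
      have h2 := abs_sub (f x) m
      have h3 := le_abs_self M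
      change |f x - m| ≤ _
      linarith
    have hgQ : ∀ x ∉ tsupport f, ∀ y ∉ tsupport f, g x = g y := fun x hx y hy => by
      simp only [hg, image_eq_zero_of_notMem_tsupport hx, image_eq_zero_of_notMem_tsupport hy]
    have hzero := fun (n k : ℕ) => hausdorffMeasure_large_deviation_eq_zero (s := s) hα hφadd
      hφmeas hdiv hinv hunif (by positivity) hMg hLg hfc.isCompact hgQ hC hCmix hγ0 hγ1 hγγ hsγ
      (isCompact_compactCovering X n) (ε := 1 / ((k : ℝ) + 1)) (by positivity)
    refine dimH_le_of_hausdorffMeasure_ne_top (d := s) ?_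
    refine ne_of_eq_of_ne (measure_mono_null ?_
      (measure_iUnion_null fun n => measure_iUnion_null fun k => hzero n k)) ENNReal.zero_ne_top
    intro x hx
    obtain ⟨n, hn⟩ := mem_iUnion.1
      ((iUnion_compactCovering X).symm ▸ mem_univ x : x ∈ ⋃ n, compactCovering X n)
    rw [mem_ofPred_eq, Metric.tendsto_nhds] at hx
    push Not at hx
    obtain ⟨ε, hε, hfreq⟩ := hx
    obtain ⟨k, hk⟩ := exists_nat_one_div_lt hε
    refine mem_iUnion.2 ⟨n, mem_iUnion.2 ⟨k, hn, ?_⟩⟩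
    refine (hfreq.and_eventually (eventually_gt_atTop 0)).mono ?_
    rintro T ⟨hT1, hT⟩
    have hI : ∫ t in (0:ℝ)..T, g (φ t x) = T * (flowAvg φ f T x - m) := by
      simp only [hg]
      rw [intervalIntegral.integral_sub
        (intervalIntegrable_orbit hφmeas hL.continuous.measurable hM x 0 T)
        intervalIntegrable_const, intervalIntegral.integral_const, flowAvg]
      simp only [sub_zero, smul_eq_mul]
      field_simp
    rw [hI, abs_mul, abs_of_pos hT, mul_comm]
    rw [Real.dist_eq] at hT1
    gcongr
    linarith
  have hsub : {x : X | ∃ f : X → ℝ, Continuous f ∧ HasCompactSupport f ∧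
        0 < Filter.limsup (fun T : ℝ => |flowAvg φ f T x - ∫ y, f y ∂μ|) Filter.atTop} ⊆
      ⋃ f ∈ S, {x : X | ¬ Tendsto (fun T => flowAvg φ f T x) atTop (nhds (∫ y, f y ∂μ))} := by
    rintro x ⟨f, hf, hfc, hpos⟩
    by_contra hcon
    simp only [mem_iUnion, mem_ofPred_eq, not_exists, not_not] at hcon
    have ht := tendsto_flowAvg_of_dense hφmeas hSLip hSdense hcon hf hfc
    have h0 : Tendsto (fun T => |flowAvg φ f T x - ∫ y, f y ∂μ|) atTop (nhds 0) := by
      simpa using (ht.sub_const (∫ y, f y ∂μ)).abs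
    rw [h0.limsup_eq] at hpos
    exact lt_irrefl _ hpos
  refine (dimH_mono hsub).trans ?_
  rw [dimH_bUnion hScount]
  refine iSup₂_le fun f hfS => ?_
  refine le_of_forall_gt_imp_ge_of_dense fun d hd => ?_
  obtain ⟨s, hs1, hs2⟩ := ENNReal.lt_iff_exists_nnreal_btwn.1 hd
  exact (hSdim s hs1 f hfS).trans hs2.le
end

section
/- Let (X,d) be a metric space, K ⊆ X a compact subset, α > 0, Φ = {φ_t}_{t∈ℝ} a Borel measurable, (d,α)-polynomially-sub-divergent flow on X, μ a Φ-invariant Borel probability measure on X, and f : X → ℝ a Lipschitz function with ∫ f dμ = 0 that is constant outside of a compact set. Then there exists a constant D > 1 with the following property: if x,y ∈ K, κ ∈ (0,1), and T > 1 satisfy |(A_T f)(x)| ≤ T^{−κ} and d(x,y) ≤ T^{−α−κ}, then |(A_T f)(y)| ≤ T^{−κ'} where κ' := κ − log_T(D), i.e. |(A_T f)(y)| ≤ D·T^{−κ}. -/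
/-!
The time-`t` discrepancy `|f (φ t x) - f (φ t y)|` is controlled separately for `t ≤ 1` and `t > 1`.

For `t ≤ 1` nothing is known about divergence, but `f` is bounded (continuous on a compact set and
constant off it), so this part contributes `O(1)` to the integral and `O(1/T) ≤ O(T ^ (-κ))` to the
average, because `κ < 1`.

For `1 < t ≤ T`, sub-divergence is applied to the compact set `K ∪ K₀`, where `f` is constant off
`K₀`. If one of `φ t x`, `φ t y` lies in `K₀`, the discrepancy is at most
`L * C * t ^ α * dist x y ≤ L * C * T ^ (-κ)`; otherwise both values of `f` agree.
-/

open MeasureTheory Filter Metric Set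

/-- A continuous function that is constant outside a compact set is bounded. -/
lemma exists_bound_of_const_off_compact {X : Type*} [TopologicalSpace X] {f : X → ℝ}
    (hf : Continuous f) {K₀ : Set X} (hK₀ : IsCompact K₀) {c₀ : ℝ} (hc : ∀ x ∉ K₀, f x = c₀) :
    ∃ M : ℝ, 0 ≤ M ∧ ∀ x, |f x| ≤ M := by
  obtain ⟨B, hB⟩ := hK₀.exists_bound_of_continuousOn hf.continuousOn
  refine ⟨max B |c₀|, (abs_nonneg _).trans (le_max_right _ _), fun x => ?_⟩
  by_cases hx : x ∈ K₀
  · exact (hB x hx).trans (le_max_left _ _)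
  · rw [hc x hx]
    exact le_max_right _ _

/-- Sub-divergence on `K ∪ K₀` transfers to `f` for all times `t > 1`: when neither
`φ t x` nor `φ t y` is in `K₀` the two values of `f` coincide, and otherwise the estimate is applied to `(x, y)` or
to `(y, x)`. -/
lemma abs_sub_le_of_subdivergent {X : Type*} [MetricSpace X] {φ : ℝ → X → X} {K K₀ : Set X}
    {α C c₀ : ℝ} (hC : 0 < C)
    (hdiv : ∀ x ∈ K ∪ K₀, ∀ y ∈ K ∪ K₀, ∀ t : ℝ, 1 < t →
      φ t x ∈ K ∪ K₀ → dist (φ t x) (φ t y) ≤ C * t ^ α * dist x y)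
    {f : X → ℝ} {L : NNReal} (hL : LipschitzWith L f) (hc : ∀ x ∉ K₀, f x = c₀)
    {x y : X} (hx : x ∈ K) (hy : y ∈ K) {t : ℝ} (ht : 1 < t) :
    |f (φ t x) - f (φ t y)| ≤ L * (C * t ^ α * dist x y) := by
  have ht0 : 0 ≤ t := by linarith
  have hlip : |f (φ t x) - f (φ t y)| ≤ L * dist (φ t x) (φ t y) := by
    simpa [Real.dist_eq] using hL.dist_le_mul (φ t x) (φ t y)
  by_cases h1 : φ t x ∈ K₀
  · exact hlip.trans (mul_le_mul_of_nonneg_left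
      (hdiv x (Or.inl hx) y (Or.inl hy) t ht (Or.inr h1)) L.coe_nonneg)
  by_cases h2 : φ t y ∈ K₀
  · have h := hdiv y (Or.inl hy) x (Or.inl hx) t ht (Or.inr h2)
    rw [dist_comm (φ t y), dist_comm y] at h
    exact hlip.trans (mul_le_mul_of_nonneg_left h L.coe_nonneg)
  · rw [hc _ h1, hc _ h2, sub_self, abs_zero]
    positivity

theorem clustering_good_points
    {X : Type*} [MetricSpace X] [MeasurableSpace X] [BorelSpace X]
    (K : Set X) (hK : IsCompact K)
    (α : ℝ) (hα : 0 < α)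
    (φ : ℝ → X → X)
    (hφ0 : ∀ x, φ 0 x = x)
    (hφadd : ∀ s t : ℝ, ∀ x, φ (s + t) x = φ s (φ t x))
    (hφmeas : Measurable fun p : ℝ × X => φ p.1 p.2)
    (hdiv : ∀ K' : Set X, IsCompact K' → ∃ C > 0, ∀ x ∈ K', ∀ y ∈ K', ∀ t : ℝ, 1 < t →
      φ t x ∈ K' → dist (φ t x) (φ t y) ≤ C * t ^ α * dist x y)
    (μ : Measure X) [IsProbabilityMeasure μ]
    (hinv : ∀ t : ℝ, MeasurePreserving (φ t) μ μ)
    (f : X → ℝ)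
    (hfLip : ∃ L : NNReal, LipschitzWith L f)
    (hzero : ∫ x, f x ∂μ = 0)
    (hfconst : ∃ K₀ : Set X, IsCompact K₀ ∧ ∃ c₀ : ℝ, ∀ x ∉ K₀, f x = c₀) :
    ∃ D : ℝ, 1 < D ∧ ∀ x ∈ K, ∀ y ∈ K, ∀ κ ∈ Set.Ioo (0:ℝ) 1, ∀ T : ℝ, 1 < T →
      |flowAvg φ f T x| ≤ T ^ (-κ) → dist x y ≤ T ^ (-α - κ) →
      |flowAvg φ f T y| ≤ D * T ^ (-κ) := by
  obtain ⟨L, hL⟩ := hfLip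
  obtain ⟨K₀, hK₀, c₀, hc⟩ := hfconst
  obtain ⟨C, hC, hdivC⟩ := hdiv (K ∪ K₀) (hK.union hK₀)
  obtain ⟨M, hM0, hM⟩ := exists_bound_of_const_off_compact hL.continuous hK₀ hc
  have hLC : 0 ≤ (L : ℝ) * C := by positivity
  -- `2 * M` absorbs the times `t ≤ 1`, `L * C` the times `t > 1`, and `2` the average at `x`
  -- (for which `1` is enough) together with the requirement `1 < D`.
  refine ⟨2 * M + L * C + 2, by linarith, ?_⟩
  intro x hx y hy κ hκ T hT hA hd
  have hT0 : 0 < T := by linarith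
  have hTκ : 0 < T ^ (-κ) := Real.rpow_pos_of_pos hT0 _
  have hint : ∀ (z : X) (a b : ℝ), IntervalIntegrable (fun t => f (φ t z)) volume a b := by
    intro z a b
    have hmeas : Measurable fun t => f (φ t z) :=
      hL.continuous.measurable.comp (hφmeas.comp (measurable_id.prodMk measurable_const))
    exact (intervalIntegrable_const (c := M)).mono_fun hmeas.aestronglyMeasurable
      (ae_of_all _ fun t => by
        change |f (φ t z)| ≤ |M|
        exact (hM _).trans (le_abs_self M))
  have hdint : ∀ a b : ℝ, IntervalIntegrable (fun t => f (φ t x) - f (φ t y)) volume a b :=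
    fun a b => (hint x a b).sub (hint y a b)
  have h01 : ‖∫ t in (0:ℝ)..1, (f (φ t x) - f (φ t y))‖ ≤ 2 * M * |1 - 0| := by
    refine intervalIntegral.norm_integral_le_of_norm_le_const fun t _ => ?_
    calc ‖f (φ t x) - f (φ t y)‖ ≤ ‖f (φ t x)‖ + ‖f (φ t y)‖ := norm_sub_le _ _
      _ ≤ M + M := add_le_add (hM _) (hM _)
      _ = 2 * M := by ring
  have h1T : ‖∫ t in (1:ℝ)..T, (f (φ t x) - f (φ t y))‖ ≤ L * C * T ^ (-κ) * |T - 1| := by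
    refine intervalIntegral.norm_integral_le_of_norm_le_const fun t ht => ?_
    rw [uIoc_of_le hT.le] at ht
    have ht0 : 0 ≤ t := by linarith [ht.1]
    calc ‖f (φ t x) - f (φ t y)‖ ≤ L * (C * t ^ α * dist x y) :=
          abs_sub_le_of_subdivergent hC hdivC hL hc hx hy ht.1
      _ ≤ L * (C * T ^ α * T ^ (-α - κ)) := by
          have := Real.rpow_le_rpow ht0 ht.2 hα.le
          gcongr
      _ = L * C * (T ^ α * T ^ (-α - κ)) := by ring
      _ = L * C * T ^ (-κ) := by
          rw [← Real.rpow_add hT0]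
          ring_nf
  have hdiff : |flowAvg φ f T x - flowAvg φ f T y| ≤ (2 * M + L * C) * T ^ (-κ) := by
    have hsplit : flowAvg φ f T x - flowAvg φ f T y = (1 / T) *
        ((∫ t in (0:ℝ)..1, (f (φ t x) - f (φ t y))) +
          ∫ t in (1:ℝ)..T, (f (φ t x) - f (φ t y))) := by
      rw [intervalIntegral.integral_add_adjacent_intervals (hdint 0 1) (hdint 1 T),
        intervalIntegral.integral_sub (hint x 0 T) (hint y 0 T)]
      simp only [flowAvg]
      ring
    -- This is where `κ < 1` is needed.
    have hone : 1 ≤ T ^ (-κ) * T := by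
      rw [← Real.rpow_add_one hT0.ne']
      exact Real.one_le_rpow hT.le (by linarith [hκ.2])
    rw [hsplit, abs_mul, abs_of_pos (by positivity : 0 < 1 / T), one_div, inv_mul_le_iff₀ hT0]
    rw [Real.norm_eq_abs] at h01 h1T
    rw [sub_zero, abs_one, mul_one] at h01
    rw [abs_of_pos (by linarith : 0 < T - 1)] at h1T
    have hM' : 2 * M * 1 ≤ 2 * M * (T ^ (-κ) * T) := by gcongr
    have hpos : 0 ≤ L * C * T ^ (-κ) := by positivity
    calc _ ≤ _ := abs_add_le _ _
      _ ≤ 2 * M * (T ^ (-κ) * T) + L * C * T ^ (-κ) * T := by linarith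
      _ = T * ((2 * M + L * C) * T ^ (-κ)) := by ring
  have htri : |flowAvg φ f T y| ≤
      |flowAvg φ f T x| + |flowAvg φ f T x - flowAvg φ f T y| := by
    have := abs_sub (flowAvg φ f T x) (flowAvg φ f T x - flowAvg φ f T y)
    rwa [sub_sub_cancel] at this
  linarith
end

section
/- Let (X,d) be a σ-compact metric space, α > 0, Φ = {φ_t}_{t∈ℝ} a Borel measurable, (d,α)-polynomially-sub-divergent flow on X, β > 0, μ a Φ-invariant, (d,β)-sub-uniform Borel probability measure on X, γ ∈ (0,1), and f : X → ℝ a Lipschitz function with ∫ f dμ = 0 that is constant outside of a compact set, such that Φ is (f,μ,γ)-polynomially-mixing. Then for every ε > 0, the Hausdorff dimension of E(Φ,μ,f,ε) := { x ∈ X : limsup_{m→∞} |(A_{(1+ε)^m} f)(x)| > 0 } is at most β − α⁻¹·γ. -/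
/-!
Put `T = (1 + ε) ^ m`. Decay of correlations gives `‖A_T f‖₂² = O(T ^ (-γ))`
(`integral_flowAvg_sq_le`), so by Chebyshev the set `G` where `|A_T f| ≥ δ / 2` has measure
`O(T ^ (-γ))`. Sub-divergence makes `A_T f` nearly constant on balls of radius `r = κ T ^ (-α)`
centred in a compact set `K` (`abs_flowAvg_sub_le`), so every such ball around a point of `K` with
`|A_T f| > δ` lies in `G`. As each of these balls has mass at least `c r ^ β`, a Vitali packing
(`exists_packing_cover`) covers the bad points of `K` by `O(T ^ (αβ - γ))` balls of radius `5 r`.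
Their `s`-dimensional cost is `O(T ^ (α (β - s) - γ))`, which is summable over `m` as soon as
`s > β - γ / α`, and the Borel–Cantelli argument `dimH_frequently_le` bounds the dimension of the
points that are bad for infinitely many `m`. Countably many `K` and `δ` exhaust the deviation set.

The balls are not contained in `K`, and `K` may have no compact neighbourhood;
`subdivergence_near` extends the sub-divergence estimate to points close to `K`.
-/

open MeasureTheory Filter Metric Set

open scoped Topology ENNReal NNReal

/-! ### Covering arguments -/

/-- Convergence half of a Borel–Cantelli argument for Hausdorff dimension: if, for all large `m`,
`S m` is covered by countably many balls of radius `R m → 0` whose `s`-dimensional costs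
`∑ (2 R m) ^ s ≤ a m` are summable in `m`, then the limsup set of the `S m` has dimension at most `s`. The cover at scale `n`
is the union of the covers of `S m` over all `m ≥ n`. -/
theorem dimH_frequently_le {X : Type*} [MetricSpace X] (S : ℕ → Set X) (s : ℝ≥0)
    (R : ℕ → ℝ) (hR : Antitone R) (hR0 : Tendsto R atTop (𝓝 0)) (a : ℕ → ℝ≥0∞)
    (ha : ∑' m, a m ≠ ∞)
    (hcov : ∀ᶠ m in atTop, ∃ u : Set X, u.Countable ∧ (S m ⊆ ⋃ x ∈ u, closedBall x (R m)) ∧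
      ∑' _ : u, ENNReal.ofReal (2 * R m) ^ (s : ℝ) ≤ a m) :
    dimH {x | ∃ᶠ m in atTop, x ∈ S m} ≤ s := by
  borelize X
  obtain ⟨m₀, h⟩ := eventually_atTop.1 hcov
  choose u hu hS hsum using fun k => h (m₀ + k) (Nat.le_add_right _ _)
  have hdiam : ∀ (x : X) m, ediam (closedBall x (R m)) ≤ ENNReal.ofReal (2 * R m) := by
    intro x m
    refine Metric.ediam_le_of_forall_dist_le fun y hy z hz => ?_
    have := dist_triangle_right y z x
    rw [mem_closedBall] at hy hz
    linarith
  have hc : ∀ n, Countable (Σ k, u (n + k)) := fun n =>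
    haveI := fun k => (hu (n + k)).to_subtype
    inferInstance
  apply dimH_le_of_hausdorffMeasure_ne_top
  have key := Measure.hausdorffMeasure_le_liminf_tsum (ι := fun n => Σ k, u (n + k)) (s : ℝ)
    {x | ∃ᶠ m in atTop, x ∈ S m} (l := atTop) (fun n => ENNReal.ofReal (2 * R (m₀ + n)))
    (by
      have h1 : Tendsto (fun n => 2 * R (m₀ + n)) atTop (𝓝 0) := by
        have := (hR0.comp (tendsto_add_atTop_nat m₀)).const_mul 2
        simpa [Function.comp_def, add_comm] using this
      simpa using ENNReal.tendsto_ofReal h1)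
    (fun n i => closedBall (i.2 : X) (R (m₀ + (n + i.1))))
    (Eventually.of_forall fun n i => (hdiam _ _).trans
      (ENNReal.ofReal_le_ofReal (by have := hR (show m₀ + n ≤ m₀ + (n + i.1) by omega); linarith)))
    (Eventually.of_forall fun n x hx => by
      obtain ⟨m, hm, hxm⟩ := frequently_atTop.1 hx (m₀ + n)
      obtain ⟨k, rfl⟩ := Nat.exists_eq_add_of_le hm
      rw [add_assoc] at hxm
      obtain ⟨y, hy, hxy⟩ := mem_iUnion₂.1 (hS _ hxm)
      exact mem_iUnion.2 ⟨⟨k, y, hy⟩, hxy⟩)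
  refine ne_top_of_le_ne_top ha (key.trans ?_)
  refine (liminf_le_liminf (v := fun _ => ∑' m, a m) (Eventually.of_forall fun n => ?_)).trans
    (by simp)
  calc ∑' i : Σ k, u (n + k), ediam (closedBall (i.2 : X) (R (m₀ + (n + i.1)))) ^ (s : ℝ)
      ≤ ∑' i : Σ k, u (n + k), ENNReal.ofReal (2 * R (m₀ + (n + i.1))) ^ (s : ℝ) :=
        ENNReal.tsum_le_tsum fun i => ENNReal.rpow_le_rpow (hdiam _ _) s.2
    _ = ∑' k, ∑' _ : u (n + k), ENNReal.ofReal (2 * R (m₀ + (n + k))) ^ (s : ℝ) :=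
        ENNReal.tsum_sigma' _
    _ ≤ ∑' k, a (m₀ + (n + k)) := ENNReal.tsum_le_tsum fun k => hsum _
    _ ≤ ∑' m, a m := ENNReal.tsum_comp_le_tsum_of_injective
        (f := fun k => m₀ + (n + k)) (fun i j hij => by simpa using hij) a

/-- Vitali covering with balls of one radius: the number of balls needed to cover `S`, times a lower
bound `b` for their mass, is controlled by the mass of any set containing all the `r`-balls centred
in `S`. The sum over `u` of the constant `b` encodes `#u * b`. -/
theorem exists_packing_cover {X : Type*} [MetricSpace X] [SecondCountableTopology X]
    [MeasurableSpace X] [BorelSpace X] (μ : Measure X) (S G : Set X) (r : ℝ) (hr : 0 < r)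
    (b : ℝ≥0∞) (hb : ∀ x ∈ S, b ≤ μ (ball x r)) (hG : ∀ x ∈ S, ball x r ⊆ G) :
    ∃ u : Set X, u.Countable ∧ (S ⊆ ⋃ x ∈ u, closedBall x (5 * r)) ∧ ∑' _ : u, b ≤ μ G := by
  obtain ⟨u, huS, hd, hc⟩ := Vitali.exists_disjoint_subfamily_covering_enlargement_closedBall
    S id (fun _ => r) r (fun _ _ => le_rfl) 5 (by norm_num)
  have hd' : u.PairwiseDisjoint fun x => ball x r := hd.mono fun x => ball_subset_closedBall
  have hu : u.Countable := hd'.countable_of_isOpen (fun _ _ => isOpen_ball)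
    fun x _ => nonempty_ball.2 hr
  refine ⟨u, hu, fun x hx => ?_, ?_⟩
  · obtain ⟨y, hy, hxy⟩ := hc x hx
    exact mem_iUnion₂.2 ⟨y, hy, hxy (mem_closedBall_self hr.le)⟩
  · calc ∑' _ : u, b ≤ ∑' x : u, μ (ball (x : X) r) :=
          ENNReal.tsum_le_tsum fun x => hb _ (huS x.2)
      _ = μ (⋃ x ∈ u, ball x r) := (measure_biUnion hu hd' fun _ _ => measurableSet_ball).symm
      _ ≤ μ G := measure_mono (iUnion₂_subset fun x hx => hG x (huS hx))

/-! ### Sub-divergence near a compact set -/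

/-- Sub-divergence on compact sets self-improves: one of the two points, `y`, may leave the compact
set `K` as long as it stays uniformly close to `x ∈ K`. Since `X` need not be locally compact, `K`
has no compact neighbourhood in general; instead, a sequence of violations `(x n, y n)` at distances
tending to `0` has a subsequence whose points, together with `K` and their limit, form a compact
set, which contradicts sub-divergence there. -/
theorem subdivergence_near {X : Type*} [MetricSpace X] (α : ℝ) (φ : ℝ → X → X)
    (hdiv : ∀ K : Set X, IsCompact K → ∃ C > 0, ∀ x ∈ K, ∀ y ∈ K, ∀ t : ℝ, 1 < t →
      φ t x ∈ K → dist (φ t x) (φ t y) ≤ C * t ^ α * dist x y)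
    (K : Set X) (hK : IsCompact K) :
    ∃ C > 0, ∃ η > 0, ∀ x ∈ K, ∀ y, dist x y < η → ∀ t : ℝ, 1 < t →
      (φ t x ∈ K ∨ φ t y ∈ K) → dist (φ t x) (φ t y) ≤ C * t ^ α * dist x y := by
  by_contra! hcon
  choose x hx y hxy t ht hmem hlt using fun n : ℕ =>
    hcon ((n : ℝ) + 1) (by positivity) (1 / ((n : ℝ) + 1)) (by positivity)
  obtain ⟨z, hz, ψ, hψ, hlim⟩ := hK.tendsto_subseq hx
  have hylim : Tendsto (y ∘ ψ) atTop (𝓝 z) := by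
    refine (tendsto_iff_of_dist ?_).1 hlim
    refine squeeze_zero (fun _ => dist_nonneg) (fun n => (hxy (ψ n)).le) ?_
    exact tendsto_one_div_add_atTop_nhds_zero_nat.comp hψ.tendsto_atTop
  obtain ⟨C, -, hC⟩ := hdiv _ (hK.union hylim.isCompact_insert_range)
  obtain ⟨n, hn⟩ := exists_nat_gt C
  have hxK : x (ψ n) ∈ K ∪ insert z (range (y ∘ ψ)) := Or.inl (hx _)
  have hyK : y (ψ n) ∈ K ∪ insert z (range (y ∘ ψ)) := Or.inr (Or.inr ⟨n, rfl⟩)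
  have hle : dist (φ (t (ψ n)) (x (ψ n))) (φ (t (ψ n)) (y (ψ n)))
      ≤ C * t (ψ n) ^ α * dist (x (ψ n)) (y (ψ n)) := by
    rcases hmem (ψ n) with h | h
    · exact hC _ hxK _ hyK _ (ht _) (Or.inl h)
    · rw [dist_comm, dist_comm (x _)]
      exact hC _ hyK _ hxK _ (ht _) (Or.inl h)
  have hCn : C ≤ (ψ n : ℝ) + 1 := by
    have : (n : ℝ) ≤ ψ n := by exact_mod_cast hψ.id_le n
    linarith
  have ht0 : 0 ≤ t (ψ n) ^ α := Real.rpow_nonneg (by linarith [ht (ψ n)]) _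
  have := hlt (ψ n)
  have : C * t (ψ n) ^ α * dist (x (ψ n)) (y (ψ n)) ≤
      ((ψ n : ℝ) + 1) * t (ψ n) ^ α * dist (x (ψ n)) (y (ψ n)) := by gcongr
  linarith

/-! ### Variance of the orbit averages -/

theorem exists_abs_bound {X : Type*} [TopologicalSpace X] (f : X → ℝ) (hf : Continuous f)
    (hfconst : ∃ K₀ : Set X, IsCompact K₀ ∧ ∃ c₀ : ℝ, ∀ x ∉ K₀, f x = c₀) :
    ∃ M, 0 < M ∧ ∀ x, |f x| ≤ M := by
  obtain ⟨K₀, hK₀, c₀, hc⟩ := hfconst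
  obtain ⟨B, hB⟩ := hK₀.exists_bound_of_continuousOn hf.continuousOn
  refine ⟨max B |c₀| + 1, by positivity, fun x => ?_⟩
  by_cases h : x ∈ K₀
  · have := hB x h
    rw [Real.norm_eq_abs] at this
    linarith [le_max_left B |c₀|]
  · rw [hc x h]; linarith [le_max_right B |c₀|]

theorem integral_abs_sub_rpow_le (γ : ℝ) (hγ : γ ∈ Set.Ioo (0:ℝ) 1) (T s : ℝ)
    (hs : s ∈ Set.Ioc 0 T) :
    IntervalIntegrable (fun t => |t - s| ^ (-γ)) volume 0 T ∧
    ∫ t in (0:ℝ)..T, |t - s| ^ (-γ) ≤ 2 / (1 - γ) * T ^ (1 - γ) := by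
  have h1 : -1 < -γ := by linarith [hγ.2]
  have hγ' : 0 < 1 - γ := by linarith [hγ.2]
  have e1 : ∀ t ∈ uIcc 0 s, (s - t) ^ (-γ) = |t - s| ^ (-γ) := by
    intro t ht
    rw [uIcc_of_le hs.1.le] at ht
    rw [abs_sub_comm, abs_of_nonneg (by linarith [ht.2])]
  have e2 : ∀ t ∈ uIcc s T, (t - s) ^ (-γ) = |t - s| ^ (-γ) := by
    intro t ht
    rw [uIcc_of_le hs.2] at ht
    rw [abs_of_nonneg (by linarith [ht.1])]
  have i1 : IntervalIntegrable (fun t => |t - s| ^ (-γ)) volume 0 s := by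
    have := (intervalIntegral.intervalIntegrable_rpow' (a := s) (b := 0) h1).comp_sub_left s
    simp only [sub_self, sub_zero] at this
    exact IntervalIntegrable.congr (fun t ht => e1 t (uIoc_subset_uIcc ht)) this
  have i2 : IntervalIntegrable (fun t => |t - s| ^ (-γ)) volume s T := by
    have := (intervalIntegral.intervalIntegrable_rpow' (a := 0) (b := T - s) h1).comp_sub_right s
    simp only [zero_add, sub_add_cancel] at this
    exact IntervalIntegrable.congr (fun t ht => e2 t (uIoc_subset_uIcc ht)) this
  refine ⟨i1.trans i2, ?_⟩
  rw [← intervalIntegral.integral_add_adjacent_intervals i1 i2,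
    ← intervalIntegral.integral_congr e1, ← intervalIntegral.integral_congr e2,
    intervalIntegral.integral_comp_sub_left (fun t => t ^ (-γ)),
    intervalIntegral.integral_comp_sub_right (fun t => t ^ (-γ)),
    integral_rpow (Or.inl h1), integral_rpow (Or.inl h1)]
  have e : -γ + 1 = 1 - γ := by ring
  simp only [sub_self, sub_zero, e, Real.zero_rpow hγ'.ne']
  have a1 : s ^ (1 - γ) ≤ T ^ (1 - γ) := Real.rpow_le_rpow hs.1.le hs.2 hγ'.le
  have a2 : (T - s) ^ (1 - γ) ≤ T ^ (1 - γ) :=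
    Real.rpow_le_rpow (by linarith [hs.2]) (by linarith [hs.1]) hγ'.le
  rw [← add_div, div_mul_eq_mul_div]
  gcongr
  linarith

/-- Mixing in a form valid for all pairs of distinct times: by invariance the correlation depends
only on `t - s`, and for `|t - s| ≤ 1` the trivial bound `M ^ 2` is at most
`M ^ 2 * |t - s| ^ (-γ)`. -/
theorem abs_correlation_le {X : Type*} [MeasurableSpace X]
    (φ : ℝ → X → X)
    (hφadd : ∀ s t : ℝ, ∀ x, φ (s + t) x = φ s (φ t x))
    (μ : Measure X) [IsProbabilityMeasure μ]
    (hinv : ∀ t : ℝ, MeasurePreserving (φ t) μ μ)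
    (γ : ℝ) (hγ : γ ∈ Set.Ioo (0:ℝ) 1) (f : X → ℝ) (hf : Measurable f)
    (M : ℝ) (hM : ∀ x, |f x| ≤ M) (C : ℝ)
    (hmix : ∀ t : ℝ, 1 < t → |∫ x, f x * f (φ t x) ∂μ| ≤ C * t ^ (-γ)) (s t : ℝ) (hst : s ≠ t) :
    |∫ x, f (φ s x) * f (φ t x) ∂μ| ≤ max C (M ^ 2) * |t - s| ^ (-γ) := by
  wlog hlt : s < t generalizing s t
  · have := this t s hst.symm (lt_of_le_of_ne (not_lt.1 hlt) hst.symm)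
    rw [abs_sub_comm]
    simpa only [mul_comm] using this
  have hpos : 0 < t - s := sub_pos.2 hlt
  rw [abs_of_pos hpos]
  rcases lt_or_ge 1 (t - s) with h1 | h1
  · have e : ∫ x, f (φ s x) * f (φ t x) ∂μ = ∫ x, f x * f (φ (t - s) x) ∂μ := by
      have hm : Measurable fun x => f x * f (φ (t - s) x) :=
        hf.mul (hf.comp (hinv _).measurable)
      have := integral_map (hinv s).measurable.aemeasurable (μ := μ)
        (f := fun x => f x * f (φ (t - s) x)) hm.aestronglyMeasurable
      rw [(hinv s).map_eq] at this
      rw [this]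
      congr 1 with x
      rw [← hφadd, sub_add_cancel]
    rw [e]
    refine (hmix _ h1).trans ?_
    gcongr
    exact le_max_left _ _
  · have hb : |∫ x, f (φ s x) * f (φ t x) ∂μ| ≤ M ^ 2 := by
      have := norm_integral_le_of_norm_le_const (μ := μ)
        (f := fun x => f (φ s x) * f (φ t x)) (C := M ^ 2)
        (Eventually.of_forall fun x => by
          rw [norm_mul, Real.norm_eq_abs, Real.norm_eq_abs, sq]
          exact mul_le_mul (hM _) (hM _) (abs_nonneg _) ((abs_nonneg _).trans (hM (φ s x))))
      simpa using this
    have h2 : 1 ≤ (t - s) ^ (-γ) :=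
      Real.one_le_rpow_of_pos_of_le_one_of_nonpos hpos h1 (by linarith [hγ.1])
    have h3 : 0 ≤ M ^ 2 := sq_nonneg M
    calc _ ≤ M ^ 2 := hb
      _ ≤ max C (M ^ 2) := le_max_right _ _
      _ ≤ _ := le_mul_of_one_le_right (h3.trans (le_max_right _ _)) h2

theorem measurable_flowAvg {X : Type*} [MeasurableSpace X] (φ : ℝ → X → X)
    (hφmeas : Measurable fun p : ℝ × X => φ p.1 p.2) (f : X → ℝ) (hf : Measurable f) (T : ℝ)
    (hT : 0 < T) : Measurable (flowAvg φ f T) := by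
  have h : StronglyMeasurable fun p : X × ℝ => f (φ p.2 p.1) :=
    (hf.comp (hφmeas.comp measurable_swap)).stronglyMeasurable
  have := (h.integral_prod_right' (ν := volume.restrict (Ioc 0 T))).measurable
  unfold flowAvg
  simp only [intervalIntegral.integral_of_le hT.le]
  exact this.const_mul _

/-- Variance estimate: polynomial decay of correlations at rate `γ < 1` gives
`‖A_T f‖₂² = O(T ^ (-γ))`. -/
theorem integral_flowAvg_sq_le {X : Type*} [MeasurableSpace X]
    (φ : ℝ → X → X)
    (hφadd : ∀ s t : ℝ, ∀ x, φ (s + t) x = φ s (φ t x))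
    (hφmeas : Measurable fun p : ℝ × X => φ p.1 p.2)
    (μ : Measure X) [IsProbabilityMeasure μ]
    (hinv : ∀ t : ℝ, MeasurePreserving (φ t) μ μ)
    (γ : ℝ) (hγ : γ ∈ Set.Ioo (0:ℝ) 1) (f : X → ℝ) (hf : Measurable f)
    (M : ℝ) (hM : ∀ x, |f x| ≤ M) (C : ℝ)
    (hmix : ∀ t : ℝ, 1 < t → |∫ x, f x * f (φ t x) ∂μ| ≤ C * t ^ (-γ)) (T : ℝ) (hT : 0 < T) :
    ∫ x, (flowAvg φ f T x) ^ 2 ∂μ ≤ 2 * max C (M ^ 2) / (1 - γ) * T ^ (-γ) := by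
  set ν : Measure ℝ := volume.restrict (Ioc 0 T) with hν
  set D : ℝ := max C (M ^ 2)
  have hD : 0 ≤ D := (sq_nonneg M).trans (le_max_right _ _)
  have hF : Measurable fun p : ℝ × X => f (φ p.1 p.2) := hf.comp hφmeas
  have hFs : ∀ s, Measurable fun x => f (φ s x) := fun s => hf.comp (hinv s).measurable
  have hνu : ν.real univ = T := by simp [hν, hT.le]
  set G : X → ℝ := fun x => ∫ t, f (φ t x) ∂ν
  have hGm : Measurable G :=
    ((hF.comp measurable_swap).stronglyMeasurable.integral_prod_right' (ν := ν)).measurable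
  have hGb : ∀ x, |G x| ≤ M * T := by
    intro x
    have := norm_integral_le_of_norm_le_const (μ := ν) (f := fun t => f (φ t x)) (C := M)
      (Eventually.of_forall fun t => hM _)
    rwa [hνu] at this
  have hM0 : ∀ x : X, 0 ≤ M := fun x => (abs_nonneg _).trans (hM x)
  -- expand the square as a triple integral, with the `μ`-integral moved innermost
  have e1 : ∫ x, G x ^ 2 ∂μ = ∫ s, ∫ t, ∫ x, f (φ s x) * f (φ t x) ∂μ ∂ν ∂ν := by
    calc ∫ x, G x ^ 2 ∂μ = ∫ x, ∫ s, f (φ s x) * G x ∂ν ∂μ := by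
          congr 1 with x
          rw [integral_mul_const, sq]
      _ = ∫ s, ∫ x, f (φ s x) * G x ∂μ ∂ν := by
          refine integral_integral_swap ?_
          refine Integrable.of_bound (C := M * (M * T)) ?_ (Eventually.of_forall fun p => ?_)
          · exact ((hF.comp measurable_swap).mul (hGm.comp measurable_fst)).aestronglyMeasurable
          · simp only [Function.uncurry, norm_mul, Real.norm_eq_abs]
            exact mul_le_mul (hM _) (hGb _) (abs_nonneg _) (hM0 p.1)
      _ = ∫ s, ∫ x, ∫ t, f (φ s x) * f (φ t x) ∂ν ∂μ ∂ν := by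
          simp only [G, integral_const_mul]
      _ = _ := by
          congr 1 with s
          refine integral_integral_swap ?_
          refine Integrable.of_bound (C := M * M) ?_ (Eventually.of_forall fun p => ?_)
          · exact (((hFs s).comp measurable_fst).mul
              (hF.comp measurable_swap)).aestronglyMeasurable
          · simp only [Function.uncurry, norm_mul, Real.norm_eq_abs]
            exact mul_le_mul (hM _) (hM _) (abs_nonneg _) (hM0 p.1)
  have hin : ∀ s ∈ Ioc 0 T, ‖∫ t, ∫ x, f (φ s x) * f (φ t x) ∂μ ∂ν‖
      ≤ D * (2 / (1 - γ) * T ^ (1 - γ)) := by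
    intro s hs
    obtain ⟨hi, hle⟩ := integral_abs_sub_rpow_le γ hγ T s hs
    rw [intervalIntegrable_iff_integrableOn_Ioc_of_le hT.le] at hi
    rw [intervalIntegral.integral_of_le hT.le] at hle
    have hne : ∀ᵐ t ∂ν, s ≠ t := by
      refine ae_restrict_of_ae ?_
      filter_upwards [Measure.ae_ne volume s] with t ht using ht.symm
    have := norm_integral_le_of_norm_le (μ := ν) (hi.const_mul D)
      (f := fun t => ∫ x, f (φ s x) * f (φ t x) ∂μ)
      (hne.mono fun t ht => abs_correlation_le φ hφadd μ hinv γ hγ f hf M hM C hmix s t ht)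
    rw [integral_const_mul] at this
    exact this.trans (mul_le_mul_of_nonneg_left hle hD)
  have e2 : ∫ x, G x ^ 2 ∂μ ≤ D * (2 / (1 - γ) * T ^ (1 - γ)) * T := by
    rw [e1]
    refine (Real.le_norm_self _).trans ?_
    have := norm_integral_le_of_norm_le_const (μ := ν)
      (f := fun s => ∫ t, ∫ x, f (φ s x) * f (φ t x) ∂μ ∂ν)
      (C := D * (2 / (1 - γ) * T ^ (1 - γ)))
      ((ae_restrict_mem measurableSet_Ioc).mono fun s hs => hin s hs)
    rwa [hνu] at this
  have e3 : ∀ x, flowAvg φ f T x ^ 2 = (1 / T) ^ 2 * G x ^ 2 := by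
    intro x
    rw [flowAvg, intervalIntegral.integral_of_le hT.le, mul_pow]
  simp only [e3, integral_const_mul]
  have e4 : T ^ (1 - γ) = T * T ^ (-γ) := by
    rw [sub_eq_add_neg, Real.rpow_add hT, Real.rpow_one]
  calc (1 / T) ^ 2 * ∫ x, G x ^ 2 ∂μ
      ≤ (1 / T) ^ 2 * (D * (2 / (1 - γ) * T ^ (1 - γ)) * T) := by gcongr
    _ = _ := by rw [e4]; field_simp

/-! ### Regularity and deviation of the orbit averages -/

/-- Nearby points have close orbit averages. Sub-divergence gives nothing for times `t ≤ 1`; these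
contribute the term `2 * M / T`. -/
theorem abs_flowAvg_sub_le {X : Type*} [MetricSpace X] [MeasurableSpace X]
    (α : ℝ) (hα : 0 < α) (φ : ℝ → X → X)
    (hφmeas : Measurable fun p : ℝ × X => φ p.1 p.2)
    (f : X → ℝ) (hf : Measurable f) (M : ℝ) (hM : ∀ x, |f x| ≤ M)
    (A : ℝ) (hA : 0 ≤ A) (x y : X)
    (h : ∀ t : ℝ, 1 < t → |f (φ t x) - f (φ t y)| ≤ A * t ^ α * dist x y) (T : ℝ) (hT : 1 < T) :
    |flowAvg φ f T x - flowAvg φ f T y| ≤ 2 * M / T + A * T ^ α * dist x y := by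
  have hT0 : 0 < T := by linarith
  have hi : ∀ z a b, IntervalIntegrable (fun t => f (φ t z)) volume a b := by
    intro z a b
    have hm : Measurable fun t => f (φ t z) :=
      hf.comp (hφmeas.comp (measurable_id.prodMk measurable_const))
    have : IntervalIntegrable (fun _ : ℝ => M) volume a b := by simp
    exact this.mono_fun' hm.aestronglyMeasurable (Eventually.of_forall fun t => hM _)
  have hi' : ∀ a b, IntervalIntegrable (fun t => f (φ t x) - f (φ t y)) volume a b :=
    fun a b => (hi x a b).sub (hi y a b)
  have h1 : |∫ t in (0:ℝ)..1, (f (φ t x) - f (φ t y))| ≤ 2 * M := by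
    have := intervalIntegral.norm_integral_le_of_norm_le_const (a := 0) (b := 1) (C := 2 * M)
      (f := fun t => f (φ t x) - f (φ t y)) (fun t _ => by
        refine (norm_sub_le _ _).trans ?_
        have h1 := hM (φ t x)
        have h2 := hM (φ t y)
        simp only [Real.norm_eq_abs]
        linarith)
    simpa using this
  have h2 : |∫ t in (1:ℝ)..T, (f (φ t x) - f (φ t y))| ≤ A * T ^ α * dist x y * T := by
    have := intervalIntegral.norm_integral_le_of_norm_le_const (a := 1) (b := T)
      (C := A * T ^ α * dist x y)
      (f := fun t => f (φ t x) - f (φ t y)) (fun t ht => by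
        rw [uIoc_of_le hT.le] at ht
        refine (h t ht.1).trans ?_
        have : 0 ≤ t := by linarith [ht.1]
        have := ht.2
        gcongr)
    refine this.trans ?_
    rw [abs_of_pos (by linarith)]
    have : 0 ≤ A * T ^ α * dist x y := by positivity
    nlinarith
  have e : flowAvg φ f T x - flowAvg φ f T y =
      1 / T * ((∫ t in (0:ℝ)..1, (f (φ t x) - f (φ t y))) +
        ∫ t in (1:ℝ)..T, (f (φ t x) - f (φ t y))) := by
    rw [intervalIntegral.integral_add_adjacent_intervals (hi' _ _) (hi' _ _),
      intervalIntegral.integral_sub (hi _ _ _) (hi _ _ _), flowAvg, flowAvg, mul_sub]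
  rw [e, abs_mul, abs_of_pos (by positivity : 0 < 1 / T)]
  calc _ ≤ 1 / T * (2 * M + A * T ^ α * dist x y * T) := by
        gcongr
        exact (abs_add_le _ _).trans (add_le_add h1 h2)
    _ = _ := by field_simp

/-- Chebyshev's inequality for the orbit average. -/
theorem meas_abs_flowAvg_ge_le {X : Type*} [MeasurableSpace X]
    (φ : ℝ → X → X) (hφmeas : Measurable fun p : ℝ × X => φ p.1 p.2)
    (μ : Measure X) [IsProbabilityMeasure μ] (f : X → ℝ) (hf : Measurable f)
    (M : ℝ) (hM : ∀ x, |f x| ≤ M) (T : ℝ) (hT : 0 < T) (W : ℝ)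
    (hW : ∫ x, (flowAvg φ f T x) ^ 2 ∂μ ≤ W) (δ : ℝ) (hδ : 0 < δ) :
    μ {x | δ ≤ |flowAvg φ f T x|} ≤ ENNReal.ofReal (W / δ ^ 2) := by
  have hm := measurable_flowAvg φ hφmeas f hf T hT
  have hb : ∀ x, |flowAvg φ f T x| ≤ M := by
    intro x
    have := intervalIntegral.norm_integral_le_of_norm_le_const (a := 0) (b := T) (C := M)
      (f := fun t => f (φ t x)) (fun t _ => hM _)
    rw [sub_zero, abs_of_pos hT, Real.norm_eq_abs] at this
    rw [flowAvg, abs_mul, abs_of_pos (by positivity : 0 < 1 / T), div_mul_eq_mul_div, one_mul,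
      div_le_iff₀ hT]
    exact this
  have hint : Integrable (fun x => flowAvg φ f T x ^ 2) μ := by
    refine Integrable.of_bound (C := M ^ 2) (hm.pow_const 2).aestronglyMeasurable
      (Eventually.of_forall fun x => ?_)
    rw [norm_pow, Real.norm_eq_abs]
    exact pow_le_pow_left₀ (abs_nonneg _) (hb x) 2
  have h1 := mul_meas_ge_le_integral_of_nonneg
    (Eventually.of_forall fun x => sq_nonneg (flowAvg φ f T x)) hint (δ ^ 2)
  have hset : {x | δ ≤ |flowAvg φ f T x|} = {x | δ ^ 2 ≤ flowAvg φ f T x ^ 2} := by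
    ext x
    simp only [mem_ofPred_eq]
    rw [← sq_abs (flowAvg φ f T x), pow_le_pow_iff_left₀ hδ.le (abs_nonneg _) two_ne_zero]
  rw [hset, ← ENNReal.ofReal_toReal (measure_ne_top μ _)]
  refine ENNReal.ofReal_le_ofReal ?_
  rw [le_div_iff₀ (by positivity), mul_comm]
  exact h1.trans hW

/-! ### The dimension bound -/

/-- At the scale `r = κ * T ^ (-α)`, `T = q ^ m`, the product of the cost `(10 r) ^ p` per unit of
mass `c * r ^ β` with the mass bound `V * T ^ (-γ)` is a geometric sequence in `m`. -/
theorem covering_cost_eq (α β γ p q κ c V : ℝ) (hq : 0 < q) (hκ : 0 < κ) (m : ℕ) :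
    (10 * (κ * (q ^ m) ^ (-α))) ^ p / (c * (κ * (q ^ m) ^ (-α)) ^ β) * (V * (q ^ m) ^ (-γ)) =
      10 ^ p / c * κ ^ (p - β) * V * (q ^ (-(α * (p - β) + γ))) ^ m := by
  have hT : 0 < q ^ m := by positivity
  have hr : 0 < κ * (q ^ m) ^ (-α) := by positivity
  have e1 : (κ * (q ^ m) ^ (-α)) ^ (p - β) = κ ^ (p - β) * (q ^ m) ^ (-α * (p - β)) := by
    rw [Real.mul_rpow hκ.le (by positivity), ← Real.rpow_mul hT.le]
  have e2 : (q ^ (-(α * (p - β) + γ))) ^ m = (q ^ m) ^ (-α * (p - β)) * (q ^ m) ^ (-γ) := by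
    rw [← Real.rpow_add hT, ← Real.rpow_natCast, ← Real.rpow_natCast, ← Real.rpow_mul hq.le,
      ← Real.rpow_mul hq.le]
    congr 1
    ring
  rw [e2, Real.mul_rpow (by norm_num) hr.le, mul_div_mul_comm, ← Real.rpow_sub hr, e1]
  ring

/-- The dimension bound for the part of the deviation set that lies in a compact set `K` outside
which `f` is constant, with a fixed deviation threshold `δ`. -/
theorem dimH_lacunary_piece_le
    {X : Type*} [MetricSpace X] [SecondCountableTopology X] [MeasurableSpace X] [BorelSpace X]
    (α : ℝ) (hα : 0 < α)
    (φ : ℝ → X → X)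
    (hφadd : ∀ s t : ℝ, ∀ x, φ (s + t) x = φ s (φ t x))
    (hφmeas : Measurable fun p : ℝ × X => φ p.1 p.2)
    (hdiv : ∀ K : Set X, IsCompact K → ∃ C > 0, ∀ x ∈ K, ∀ y ∈ K, ∀ t : ℝ, 1 < t →
      φ t x ∈ K → dist (φ t x) (φ t y) ≤ C * t ^ α * dist x y)
    (β : ℝ)
    (μ : Measure X) [IsProbabilityMeasure μ]
    (hinv : ∀ t : ℝ, MeasurePreserving (φ t) μ μ)
    (hunif : ∀ K : Set X, IsCompact K → ∃ c > 0, ∃ r₀ > 0, ∀ x ∈ K, ∀ r : ℝ, 0 < r → r < r₀ →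
      ENNReal.ofReal (c * r ^ β) ≤ μ (Metric.ball x r))
    (γ : ℝ) (hγ : γ ∈ Set.Ioo (0:ℝ) 1)
    (f : X → ℝ) (L : ℝ≥0) (hL : LipschitzWith L f) (M : ℝ) (hM : ∀ x, |f x| ≤ M)
    (hmix : ∃ C > 0, ∀ t : ℝ, 1 < t → |∫ x, f x * f (φ t x) ∂μ| ≤ C * t ^ (-γ))
    (q : ℝ) (hq : 1 < q) (K : Set X) (hK : IsCompact K) (c₀ : ℝ) (hc₀ : ∀ x ∉ K, f x = c₀)
    (δ : ℝ) (hδ : 0 < δ) (s : ℝ≥0) (hs : β - α⁻¹ * γ < s) :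
    dimH {x | ∃ᶠ m : ℕ in atTop, x ∈ {x ∈ K | δ < |flowAvg φ f (q ^ m) x|}} ≤ s := by
  obtain ⟨Cm, -, hmix⟩ := hmix
  obtain ⟨C, hC, η, hη, hnear⟩ := subdivergence_near α φ hdiv K hK
  obtain ⟨c, hc, r₀, hr₀, hball⟩ := hunif K hK
  have hf : Measurable f := hL.continuous.measurable
  have hq0 : 0 < q := by linarith
  set A : ℝ := L * C with hAdef
  have hA : 0 ≤ A := by positivity
  -- outside `K` the function `f` is constant, so only visits of one of the two orbits to `K` count
  have hfnear : ∀ x ∈ K, ∀ y, dist x y < η → ∀ t : ℝ, 1 < t →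
      |f (φ t x) - f (φ t y)| ≤ A * t ^ α * dist x y := by
    intro x hx y hxy t ht
    have ht0 : 0 < t := by linarith
    by_cases h : φ t x ∈ K ∨ φ t y ∈ K
    · have h1 := hL.dist_le_mul (φ t x) (φ t y)
      rw [Real.dist_eq] at h1
      calc _ ≤ L * dist (φ t x) (φ t y) := h1
        _ ≤ L * (C * t ^ α * dist x y) := by gcongr; exact hnear x hx y hxy t ht h
        _ = _ := by rw [hAdef]; ring
    · push Not at h
      rw [hc₀ _ h.1, hc₀ _ h.2, sub_self, abs_zero]
      positivity
  -- `κ` is chosen so that the averages at `x` and `y ∈ B(x, κ T ^ (-α))` differ by at most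
  -- `δ / 4`, up to the contribution of times `t ≤ 1`
  set κ : ℝ := δ / (4 * (A + 1)) with hκdef
  have hκ : 0 < κ := by positivity
  have hAκ : A * κ ≤ δ / 4 := by
    rw [hκdef, ← mul_div_assoc, div_le_div_iff₀ (by positivity) (by norm_num)]
    nlinarith
  set r : ℕ → ℝ := fun m => κ * (q ^ m) ^ (-α) with hrdef
  have hr : ∀ m, 0 < r m := fun m => by positivity
  have hTtop : Tendsto (fun m : ℕ => q ^ m) atTop atTop := tendsto_pow_atTop_atTop_of_one_lt hq
  have hr0 : Tendsto r atTop (𝓝 0) := by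
    simpa using ((tendsto_rpow_neg_atTop hα).comp hTtop).const_mul κ
  have hranti : Antitone r := by
    intro m n hmn
    refine mul_le_mul_of_nonneg_left ?_ hκ.le
    exact Real.rpow_le_rpow_of_nonpos (by positivity) (pow_le_pow_right₀ hq.le hmn) (by linarith)
  set V : ℝ := 2 * max Cm (M ^ 2) / (1 - γ) / (δ / 2) ^ 2 with hVdef
  have hV : 0 ≤ V := by
    have : 0 < 1 - γ := by linarith [hγ.2]
    have : 0 ≤ max Cm (M ^ 2) := (sq_nonneg M).trans (le_max_right _ _)
    positivity
  refine dimH_frequently_le _ s (fun m => 5 * r m) (fun m n h => by have := hranti h; simp; linarith)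
    (by simpa using hr0.const_mul 5)
    (fun m => ENNReal.ofReal (10 ^ (s : ℝ) / c * κ ^ ((s : ℝ) - β) * V *
      (q ^ (-(α * ((s : ℝ) - β) + γ))) ^ m)) ?_ ?_
  · -- the costs form a geometric series since `α * (s - β) + γ > 0`
    have hpos : 0 < α * ((s : ℝ) - β) + γ := by
      have := mul_lt_mul_of_pos_left hs hα
      rw [mul_sub, ← mul_assoc, mul_inv_cancel₀ hα.ne', one_mul] at this
      linarith
    have hρ : q ^ (-(α * ((s : ℝ) - β) + γ)) < 1 :=
      Real.rpow_lt_one_of_one_lt_of_neg hq (by linarith)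
    have hsum := (summable_geometric_of_lt_one (by positivity) hρ).mul_left
      (10 ^ (s : ℝ) / c * κ ^ ((s : ℝ) - β) * V)
    rw [← ENNReal.ofReal_tsum_of_nonneg (fun m => by positivity) hsum]
    exact ENNReal.ofReal_ne_top
  · have hMT : Tendsto (fun m : ℕ => 2 * M / q ^ m) atTop (𝓝 0) := hTtop.const_div_atTop _
    filter_upwards [hTtop.eventually_gt_atTop 1, hr0.eventually_lt_const hη,
      hr0.eventually_lt_const hr₀, hMT.eventually_lt_const (show 0 < δ / 4 by positivity)]
      with m hT1 hrη hrr₀ hMm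
    have hT0 : 0 < q ^ m := by positivity
    have hsub : ∀ x ∈ {x ∈ K | δ < |flowAvg φ f (q ^ m) x|},
        ball x (r m) ⊆ {y | δ / 2 ≤ |flowAvg φ f (q ^ m) y|} := by
      rintro x ⟨hxK, hx⟩ y hy
      rw [mem_ball'] at hy
      have h1 := abs_flowAvg_sub_le α hα φ hφmeas f hf M hM A hA x y
        (hfnear x hxK y (hy.trans hrη)) (q ^ m) hT1
      have h2 : A * (q ^ m) ^ α * dist x y ≤ A * κ := by
        calc A * (q ^ m) ^ α * dist x y ≤ A * (q ^ m) ^ α * r m := by gcongr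
          _ = A * κ * ((q ^ m) ^ α * (q ^ m) ^ (-α)) := by rw [hrdef]; ring
          _ = A * κ := by rw [← Real.rpow_add hT0]; simp
      have h3 := abs_sub_abs_le_abs_sub (flowAvg φ f (q ^ m) x) (flowAvg φ f (q ^ m) y)
      simp only [mem_ofPred_eq]
      linarith
    obtain ⟨u, hu, hcov, hsum⟩ := exists_packing_cover μ _ _ (r m) (hr m)
      (ENNReal.ofReal (c * r m ^ β)) (fun x hx => hball x hx.1 _ (hr m) hrr₀) hsub
    refine ⟨u, hu, hcov, ?_⟩
    have hmeas := meas_abs_flowAvg_ge_le φ hφmeas μ f hf M hM (q ^ m) hT0 _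
      (integral_flowAvg_sq_le φ hφadd hφmeas μ hinv γ hγ f hf M hM Cm hmix (q ^ m) hT0)
      (δ / 2) (by positivity)
    have hb : 0 < c * r m ^ β := mul_pos hc (Real.rpow_pos_of_pos (hr m) _)
    have h10 : 0 ≤ 10 * r m := by linarith [hr m]
    have hD : 0 ≤ (10 * r m) ^ (s : ℝ) / (c * r m ^ β) :=
      div_nonneg (Real.rpow_nonneg h10 _) hb.le
    have hterm : ENNReal.ofReal (2 * (5 * r m)) ^ (s : ℝ) =
        ENNReal.ofReal ((10 * r m) ^ (s : ℝ) / (c * r m ^ β)) * ENNReal.ofReal (c * r m ^ β) := by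
      rw [← ENNReal.ofReal_mul hD, div_mul_cancel₀ _ hb.ne', ← mul_assoc,
        show (2 : ℝ) * 5 = 10 by norm_num, ENNReal.ofReal_rpow_of_nonneg h10 s.coe_nonneg]
    calc ∑' _ : u, ENNReal.ofReal (2 * (5 * r m)) ^ (s : ℝ)
        = ENNReal.ofReal ((10 * r m) ^ (s : ℝ) / (c * r m ^ β)) *
            ∑' _ : u, ENNReal.ofReal (c * r m ^ β) := by
          rw [hterm, ENNReal.tsum_mul_left]
      _ ≤ ENNReal.ofReal ((10 * r m) ^ (s : ℝ) / (c * r m ^ β)) *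
            ENNReal.ofReal (V * (q ^ m) ^ (-γ)) := by
          gcongr
          refine hsum.trans (hmeas.trans (le_of_eq ?_))
          congr 1
          rw [hVdef]
          ring
      _ = _ := by
          rw [← ENNReal.ofReal_mul hD]
          congr 1
          exact covering_cost_eq α β γ s q κ c V hq0 hκ m

theorem dimH_lacunary_deviation_set_le
    {X : Type*} [MetricSpace X] [SigmaCompactSpace X] [MeasurableSpace X] [BorelSpace X]
    (α : ℝ) (hα : 0 < α)
    (φ : ℝ → X → X)
    (hφ0 : ∀ x, φ 0 x = x)
    (hφadd : ∀ s t : ℝ, ∀ x, φ (s + t) x = φ s (φ t x))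
    (hφmeas : Measurable fun p : ℝ × X => φ p.1 p.2)
    (hdiv : ∀ K : Set X, IsCompact K → ∃ C > 0, ∀ x ∈ K, ∀ y ∈ K, ∀ t : ℝ, 1 < t →
      φ t x ∈ K → dist (φ t x) (φ t y) ≤ C * t ^ α * dist x y)
    (β : ℝ) (hβ : 0 < β)
    (μ : Measure X) [IsProbabilityMeasure μ]
    (hinv : ∀ t : ℝ, MeasurePreserving (φ t) μ μ)
    (hunif : ∀ K : Set X, IsCompact K → ∃ c > 0, ∃ r₀ > 0, ∀ x ∈ K, ∀ r : ℝ, 0 < r → r < r₀ →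
      ENNReal.ofReal (c * r ^ β) ≤ μ (Metric.ball x r))
    (γ : ℝ) (hγ : γ ∈ Set.Ioo (0:ℝ) 1)
    (f : X → ℝ)
    (hfLip : ∃ L : NNReal, LipschitzWith L f)
    (hzero : ∫ x, f x ∂μ = 0)
    (hfconst : ∃ K₀ : Set X, IsCompact K₀ ∧ ∃ c₀ : ℝ, ∀ x ∉ K₀, f x = c₀)
    (hmix : ∃ C > 0, ∀ t : ℝ, 1 < t → |∫ x, f x * f (φ t x) ∂μ| ≤ C * t ^ (-γ)) :
    ∀ ε : ℝ, 0 < ε →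
      dimH {x : X |
          0 < Filter.limsup (fun m : ℕ => |flowAvg φ f ((1 + ε) ^ m) x|) Filter.atTop} ≤
        ENNReal.ofReal (β - α⁻¹ * γ) := by
  intro ε hε
  obtain ⟨L, hL⟩ := hfLip
  obtain ⟨M, -, hM⟩ := exists_abs_bound f hL.continuous hfconst
  obtain ⟨K₀, hK₀, c₀, hc₀⟩ := hfconst
  refine ENNReal.le_of_forall_pos_le_add fun e he _ => ?_
  -- exhaust the deviation set by a compact exhaustion and thresholds `1 / (n + 1)`
  have hsub : {x : X | 0 < limsup (fun m : ℕ => |flowAvg φ f ((1 + ε) ^ m) x|) atTop} ⊆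
      ⋃ p : ℕ × ℕ, {x | ∃ᶠ m : ℕ in atTop, x ∈ {x ∈ compactCovering X p.1 ∪ K₀ |
        1 / ((p.2 : ℝ) + 1) < |flowAvg φ f ((1 + ε) ^ m) x|}} := by
    intro x hx
    obtain ⟨k, hk⟩ := exists_mem_compactCovering x
    obtain ⟨n, hn⟩ := exists_nat_one_div_lt hx.out
    refine mem_iUnion.2 ⟨(k, n), ?_⟩
    have := frequently_lt_of_lt_limsup
      (isCoboundedUnder_le_of_le atTop (x := 0) fun m => abs_nonneg _) hn
    exact this.mono fun m hm => ⟨Or.inl hk, hm⟩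
  refine (dimH_mono hsub).trans ?_
  rw [dimH_iUnion]
  refine iSup_le fun p => ?_
  refine (dimH_lacunary_piece_le α hα φ hφadd hφmeas hdiv β μ hinv hunif γ hγ f L hL M hM hmix
    (1 + ε) (by linarith) _ ((isCompact_compactCovering X p.1).union hK₀) c₀
    (fun x hx => hc₀ x fun h => hx (Or.inr h)) (1 / ((p.2 : ℝ) + 1)) (by positivity)
    (Real.toNNReal (β - α⁻¹ * γ) + e) ?_).trans (le_of_eq ?_)
  · have h1 := Real.le_coe_toNNReal (β - α⁻¹ * γ)
    have h2 : (0 : ℝ) < e := by exact_mod_cast he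
    push_cast
    linarith
  · simp [ENNReal.ofReal]
end
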